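/- arXiv:1406.0701 — 11 statements merged into one kernel-verified Lean document; each statement's English description precedes it below -/
import Mathlib

section
/- For every cardinal κ with 1 ≤ κ ≤ 2^ℵ₀ there exists a family of κ pairwise disjoint nonempty subsets of ℝ, each closed under addition, whose union is ℝ. -/
/-!
Order a direct sum of copies of an ordered ring lexicographically. In a sum `x + y` of elements from
different Archimedean classes the dominant summand determines both the class and the sign, and
elements of the same class and the same sign add up to an element of that class and sign. So any
colouring by class and sign has colour classes closed under addition, provided that `x` and `y` of
opposite sign in the same class, whose sum may lie in any smaller class, get different colours.
Distinct basis vectors lie in distinct Archimedean classes, and for `ℝ` over `ℚ` there are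
continuum many of them.
-/

/-- A colouring whose colour classes are closed under addition. The fibres of a surjective such
colouring form a partition into nonempty additively closed sets indexed by the colours. -/
def HasAddClosedFibers {M ι : Type*} [Add M] (f : M → ι) : Prop :=
  ∀ ⦃x y⦄, f x = f y → f (x + y) = f x

namespace HasAddClosedFibers

variable {M N ι : Type*}

theorem of_subsingleton [Add M] [Subsingleton ι] (f : M → ι) : HasAddClosedFibers f :=
  fun _ _ _ => Subsingleton.elim _ _

theorem comp_addHom {F : Type*} [Add M] [Add N] [FunLike F N M] [AddHomClass F N M] {f : M → ι}
    (hf : HasAddClosedFibers f) (g : F) : HasAddClosedFibers (f ∘ g) := fun x y hxy => by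
  simpa only [Function.comp_apply, map_add] using hf hxy

theorem of_mk_le_mk [AddCommGroup M] [LinearOrder M] [IsOrderedAddMonoid M] {f : M → ι}
    (hf : ∀ x y, ArchimedeanClass.mk x ≤ ArchimedeanClass.mk y → f x = f y → f (x + y) = f x) :
    HasAddClosedFibers f := fun x y hxy => by
  rcases le_total (ArchimedeanClass.mk x) (ArchimedeanClass.mk y) with h | h
  · exact hf x y h hxy
  · rw [add_comm, hf y x h hxy.symm, hxy]

end HasAddClosedFibers

section LinearOrderedAddCommGroup

variable {M ι : Type*} [AddCommGroup M] [LinearOrder M] [IsOrderedAddMonoid M] {x y : M}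

theorem add_nonneg_iff_of_mk_lt_mk (h : ArchimedeanClass.mk x < ArchimedeanClass.mk y) :
    0 ≤ x + y ↔ 0 ≤ x := by
  rw [← ArchimedeanClass.mk_neg y] at h
  rw [← neg_le_iff_add_nonneg]
  refine ⟨fun hyx => ?_, fun hx => (ArchimedeanClass.lt_of_mk_lt_mk_of_nonneg h hx).le⟩
  by_contra! hx
  exact (ArchimedeanClass.lt_of_mk_lt_mk_of_nonpos h hx.le).not_ge hyx

theorem add_nonneg_iff_of_nonneg_iff (h : 0 ≤ x ↔ 0 ≤ y) : 0 ≤ x + y ↔ 0 ≤ x := by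
  refine ⟨fun hxy => ?_, fun hx => add_nonneg hx (h.1 hx)⟩
  by_contra! hx
  exact (add_neg hx (lt_of_not_ge (mt h.2 hx.not_ge))).not_ge hxy

theorem archimedeanClass_mk_add_of_nonneg_iff
    (hmk : ArchimedeanClass.mk x ≤ ArchimedeanClass.mk y) (h : 0 ≤ x ↔ 0 ≤ y) :
    ArchimedeanClass.mk (x + y) = ArchimedeanClass.mk x := by
  refine le_antisymm ?_ (ArchimedeanClass.mk_left_le_mk_add hmk)
  rcases le_or_gt 0 x with hx | hx
  · have hy : 0 ≤ y := h.1 hx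
    exact ArchimedeanClass.mk_antitoneOn hx (add_nonneg hx hy) (le_add_of_nonneg_right hy)
  · have hy : y ≤ 0 := (lt_of_not_ge (mt h.2 hx.not_ge)).le
    exact ArchimedeanClass.mk_monotoneOn (add_nonpos hx.le hy) hx.le (add_le_of_nonpos_right hy)

/-- Colours `x` by its Archimedean class and its sign, using the palette `p` for nonnegative and
the palette `n` for negative elements. -/
def signedClassColoring (p n : ArchimedeanClass M → ι) (x : M) : ι :=
  if 0 ≤ x then p (ArchimedeanClass.mk x) else n (ArchimedeanClass.mk x)

variable {p n : ArchimedeanClass M → ι}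

theorem signedClassColoring_congr (hmk : ArchimedeanClass.mk x = ArchimedeanClass.mk y)
    (h : 0 ≤ x ↔ 0 ≤ y) : signedClassColoring p n x = signedClassColoring p n y := by
  simp only [signedClassColoring, hmk, h]

theorem nonneg_iff_of_signedClassColoring_eq (hpn : ∀ c, p c ≠ n c)
    (hmk : ArchimedeanClass.mk x = ArchimedeanClass.mk y)
    (h : signedClassColoring p n x = signedClassColoring p n y) : 0 ≤ x ↔ 0 ≤ y := by
  have hp := hpn (ArchimedeanClass.mk y)
  unfold signedClassColoring at h
  rw [hmk] at h
  split_ifs at h with hx hy hy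
  · exact iff_of_true hx hy
  · exact absurd h hp
  · exact absurd h.symm hp
  · exact iff_of_false hx hy

theorem hasAddClosedFibers_signedClassColoring (hpn : ∀ c, p c ≠ n c) :
    HasAddClosedFibers (signedClassColoring p n) := by
  refine .of_mk_le_mk fun x y hmk hxy => ?_
  rcases hmk.lt_or_eq with hlt | heq
  · exact signedClassColoring_congr (ArchimedeanClass.mk_add_eq_mk_left hlt)
      (add_nonneg_iff_of_mk_lt_mk hlt)
  · have hsign : 0 ≤ x ↔ 0 ≤ y := nonneg_iff_of_signedClassColoring_eq hpn heq hxy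
    exact signedClassColoring_congr (archimedeanClass_mk_add_of_nonneg_iff hmk hsign)
      (add_nonneg_iff_of_nonneg_iff hsign)

theorem signedClassColoring_surjective (hp : Function.Surjective p) :
    Function.Surjective (signedClassColoring p n) := fun i => by
  obtain ⟨c, rfl⟩ := hp i
  obtain ⟨x, rfl⟩ := ArchimedeanClass.mk_surjective M c
  exact ⟨|x|, by rw [signedClassColoring, if_pos (abs_nonneg x), ArchimedeanClass.mk_abs]⟩

theorem exists_surjective_hasAddClosedFibers_of_archimedeanClass
    (hp : Function.Surjective p) : ∃ f : M → ι, Function.Surjective f ∧ HasAddClosedFibers f := by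
  rcases subsingleton_or_nontrivial ι with _ | _
  · exact ⟨_, hp.comp (ArchimedeanClass.mk_surjective M), .of_subsingleton _⟩
  · choose n hn using fun c => exists_ne (p c)
    exact ⟨signedClassColoring p n, signedClassColoring_surjective hp,
      hasAddClosedFibers_signedClassColoring fun c => (hn c).symm⟩

end LinearOrderedAddCommGroup

theorem archimedeanClass_mk_single_strictMono {B R : Type*} [LinearOrder B] [AddCommGroup R]
    [LinearOrder R] [IsOrderedAddMonoid R] {r : R} (hr : 0 < r) :
    StrictMono fun b : B => ArchimedeanClass.mk (toLex (Finsupp.single b r)) := by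
  have single_nonneg (b : B) : 0 ≤ toLex (Finsupp.single b r) :=
    Finsupp.toLex_monotone (Finsupp.single_nonneg.2 hr.le)
  intro b c hbc
  refine ArchimedeanClass.mk_lt_mk.2 fun k => ?_
  have nsmul_single : k • toLex (Finsupp.single c r) = toLex (Finsupp.single c (k • r)) := by
    rw [← Finsupp.smul_single]
    exact (map_nsmul (toLexAddEquiv (B →₀ R)) k _).symm
  rw [abs_of_nonneg (single_nonneg b), abs_of_nonneg (single_nonneg c), nsmul_single]
  refine Finsupp.Lex.lt_iff.2 ⟨b, fun d hd => ?_, ?_⟩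
  · simp [hd.ne', (hd.trans hbc).ne']
  · simpa [hbc.ne'] using hr

theorem exists_surjective_hasAddClosedFibers_of_basis {R M B ι : Type*} [Ring R] [LinearOrder R]
    [IsStrictOrderedRing R] [AddCommGroup M] [Module R M] [Nonempty ι]
    (e : Module.Basis B R M) (g : ι ↪ B) :
    ∃ f : M → ι, Function.Surjective f ∧ HasAddClosedFibers f := by
  classical
  let : LinearOrder B := linearOrderOfSTO WellOrderingRel
  have hmk := (archimedeanClass_mk_single_strictMono (B := B) (zero_lt_one' R)).injective
  obtain ⟨f, hf, hadd⟩ := exists_surjective_hasAddClosedFibers_of_archimedeanClass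
    (Function.invFun_surjective (hmk.comp g.injective))
  let toLexRepr : M ≃+ Lex (B →₀ R) := e.repr.toAddEquiv.trans (toLexAddEquiv _)
  exact ⟨_, hf.comp toLexRepr.surjective, hadd.comp_addHom toLexRepr⟩

theorem stmt_0_general (R : Type*) {M : Type*} [Ring R] [LinearOrder R] [IsStrictOrderedRing R]
    [StrongRankCondition R] [AddCommGroup M] [Module R M] [Module.Free R M] (κ : Cardinal)
    (h1 : 1 ≤ κ) (h2 : κ ≤ Module.rank R M) :
    ∃ (ι : Type _) (A : ι → Set M),
      Cardinal.mk ι = κ ∧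
      Pairwise (Function.onFun Disjoint A) ∧
      (∀ i, (A i).Nonempty) ∧
      (∀ i, ∀ x ∈ A i, ∀ y ∈ A i, x + y ∈ A i) ∧
      (⋃ i, A i) = Set.univ := by
  have : Nonempty κ.out := by
    rwa [← Cardinal.mk_ne_zero_iff, Cardinal.mk_out, ← Cardinal.one_le_iff_ne_zero]
  obtain ⟨g⟩ : Nonempty (κ.out ↪ Module.Free.ChooseBasisIndex R M) := by
    rwa [← Cardinal.le_def, Cardinal.mk_out, ← Module.Free.rank_eq_card_chooseBasisIndex]
  obtain ⟨f, hf, hadd⟩ :=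
    exists_surjective_hasAddClosedFibers_of_basis (Module.Free.chooseBasis R M) g
  refine ⟨κ.out, fun i => f ⁻¹' {i}, Cardinal.mk_out κ, fun i j hij => ?_, hf, ?_, ?_⟩
  · exact Disjoint.preimage f (Set.disjoint_singleton.2 hij)
  · rintro i x rfl y hy
    exact hadd hy.symm
  · exact Set.eq_univ_of_forall fun x => Set.mem_iUnion.2 ⟨f x, rfl⟩

/-- For every cardinal κ with 1 ≤ κ ≤ 2^ℵ₀ there exists a family of κ pairwise disjoint
nonempty subsets of ℝ, each closed under addition, whose union is ℝ. -/
theorem stmt_0 (κ : Cardinal) (h1 : 1 ≤ κ) (h2 : κ ≤ 2 ^ Cardinal.aleph0) :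
    ∃ (ι : Type) (A : ι → Set ℝ),
      Cardinal.mk ι = κ ∧
      Pairwise (Function.onFun Disjoint A) ∧
      (∀ i, (A i).Nonempty) ∧
      (∀ i, ∀ x ∈ A i, ∀ y ∈ A i, x + y ∈ A i) ∧
      (⋃ i, A i) = Set.univ :=
  stmt_0_general ℚ κ h1 (by rwa [Real.rank_rat_real, ← Cardinal.two_power_aleph0])
end

section
/- Let G be an infinite group and let S be a set of proper subgroups of G such that any two distinct members of S intersect exactly in the trivial subgroup {1}, and such that the union of the members of S is all of G. Then the cardinality of S equals the cardinality of G. -/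
/-!
A coset `x • H` meets every member of `S` other than `H` in at most one point, and if `x ∉ H` it
does not meet `H` at all. Since `S` covers `x • H`, this gives `#H ≤ #S` for every `H ∈ S`, and
taking the union over `S` yields `#G ≤ #S * #S`; as `G` is infinite, so is `S`, and `#G ≤ #S`.
Conversely, a nontrivial element lies in at most one member of `S`, so `#S ≤ #G`.
-/

open Cardinal
open scoped Pointwise

section EssentiallyDisjointSubgroups

variable {G : Type*} [Group G] {H K : Subgroup G} {S : Set (Subgroup G)}

theorem subsingleton_leftCoset_inter_leftCoset (hHK : Disjoint H K) (x y : G) :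
    (x • (H : Set G) ∩ y • (K : Set G)).Subsingleton := by
  have inv_mul_mem {L : Subgroup G} {z a b : G} (ha : a ∈ z • (L : Set G))
      (hb : b ∈ z • (L : Set G)) : a⁻¹ * b ∈ L := by
    rw [mem_leftCoset_iff] at ha hb
    simpa [mul_assoc] using L.mul_mem (L.inv_mem ha) hb
  rintro a ⟨haH, haK⟩ b ⟨hbH, hbK⟩
  exact inv_mul_eq_one.1 (Subgroup.disjoint_def.1 hHK (inv_mul_mem haH hbH) (inv_mul_mem haK hbK))

theorem mk_subgroup_le_mk_of_cover (hH : H ≠ ⊤) (hdisj : ∀ K ∈ S, K ≠ H → Disjoint H K)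
    (hcover : ∀ g : G, ∃ K ∈ S, g ∈ K) : #H ≤ #S := by
  obtain ⟨x, hx⟩ : ∃ x, x ∉ H := SetLike.exists_not_mem_of_ne_top H hH
  choose member hmember hmem using hcover
  have hne (a : H) : member (x * a) ≠ H := fun h =>
    hx ((H.mul_mem_cancel_right a.2).1 (h.le (hmem (x * a))))
  refine mk_le_of_injective (f := fun a : H => (⟨member (x * a), hmember _⟩ : S)) fun a b hab => ?_
  have hmember_eq : member (x * b) = member (x * a) := (congrArg Subtype.val hab).symm
  have hinter : (x • (H : Set G) ∩ member (x * a)).Subsingleton := by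
    simpa only [one_smul] using
      subsingleton_leftCoset_inter_leftCoset (hdisj _ (hmember _) (hne a)) x 1
  have hmul : x * (a : G) = x * b :=
    hinter ⟨mem_leftCoset x a.2, hmem _⟩ ⟨mem_leftCoset x b.2, hmember_eq.le (hmem _)⟩
  exact Subtype.ext (mul_left_cancel hmul)

theorem mk_group_le_mk_mul_self_of_cover (hproper : ∀ H ∈ S, H ≠ ⊤)
    (hdisj : S.PairwiseDisjoint id) (hcover : ∀ g : G, ∃ H ∈ S, g ∈ H) : #G ≤ #S * #S := by
  have hunion : ⋃ H ∈ S, (H : Set G) = Set.univ := by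
    simpa [Set.eq_univ_iff_forall] using hcover
  calc
    #G = #(⋃ H ∈ S, (H : Set G) : Set G) := by rw [hunion, mk_univ]
    _ ≤ #S * ⨆ H : S, #(H : Subgroup G) := mk_biUnion_le _ S
    _ ≤ #S * #S := by
      gcongr
      exact ciSup_le' fun H => mk_subgroup_le_mk_of_cover (hproper H H.2)
        (fun K hK hne => hdisj H.2 hK hne.symm) hcover

theorem mk_le_mk_group_of_pairwiseDisjoint (hdisj : S.PairwiseDisjoint id) : #S ≤ #G := by
  have hwitness (H : S) : ∃ g ∈ H.1, g = 1 → H.1 = ⊥ := by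
    rcases H.1.bot_or_exists_ne_one with hbot | ⟨g, hg, hg_ne⟩
    · exact ⟨1, H.1.one_mem, fun _ => hbot⟩
    · exact ⟨g, hg, fun hg_one => absurd hg_one hg_ne⟩
  choose witness hmem heq_bot using hwitness
  refine mk_le_of_injective (f := witness) fun H K hHK => ?_
  by_contra hne
  have hone : witness H = 1 :=
    Subgroup.disjoint_def.1 (hdisj H.2 K.2 (Subtype.coe_ne_coe.2 hne)) (hmem H) (hHK ▸ hmem K)
  exact hne (Subtype.ext ((heq_bot H hone).trans (heq_bot K (hHK ▸ hone)).symm))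

end EssentiallyDisjointSubgroups

/-- If an infinite group `G` is the union of a family `S` of proper subgroups that pairwise
intersect exactly in the trivial subgroup, then `|S| = |G|`. -/
theorem stmt_1 {G : Type*} [Group G] [Infinite G] (S : Set (Subgroup G))
    (hproper : ∀ H ∈ S, H ≠ (⊤ : Subgroup G))
    (hdisj : ∀ H ∈ S, ∀ K ∈ S, H ≠ K → H ⊓ K = (⊥ : Subgroup G))
    (hcover : ∀ g : G, ∃ H ∈ S, g ∈ H) :
    Cardinal.mk S = Cardinal.mk G := by
  have hpairwise : S.PairwiseDisjoint id := fun H hH K hK hne =>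
    disjoint_iff.2 (hdisj H hH K hK hne)
  have hsq : #G ≤ #S * #S := mk_group_le_mk_mul_self_of_cover hproper hpairwise hcover
  have hinf : ℵ₀ ≤ #S := by
    by_contra! hfin
    exact ((aleph0_le_mk G).trans hsq).not_gt (mul_lt_aleph0 hfin hfin)
  exact (mk_le_mk_group_of_pairwiseDisjoint hpairwise).antisymm (hsq.trans_eq (mul_eq_self hinf))
end

section
/- Suppose (B_i)_{i ∈ I} is a family of pairwise disjoint Borel subsets of ℝ whose union is the open halfline (0, ∞), and for each i ∈ I either B_i + B_i ⊆ B_i or B_i + B_i + B_i ⊆ B_i. Then either every B_i has Lebesgue measure zero and is meager, or there exists i₁ ∈ I with B_{i₁} = (0, ∞). -/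
open Pointwise

/-!
If `B i` is not null or not meagre, then `B i + B i` has nonempty interior, by Steinhaus or by
Piccard. If `B i` is closed under sums of `m + 2` elements, adding `m` copies of a fixed element
moves this interior into `B i`, so `B i` contains an interval `(a, b)` with `0 < a`. For `y` large,
`(y / b, y / a)` is longer than `m + 1` and hence contains some `k * (m + 1) + 1`; then `y` is a sum
of that many copies of one element of `(a, b)`, so `y ∈ B i`. Thus `B i` contains a half line. Any
other `B j` is closed in the same sense and so contains arbitrarily large multiples of each of its
elements: it meets `B i` unless it is empty.
-/

open MeasureTheory Filter Topology Set

section SumClosed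

variable {M : Type*} [AddCommMonoid M] {S : Set M} {m : ℕ}

/-- `S` is an `n`-ary additive subsemigroup: sums of `n` elements of `S`, repetitions allowed,
belong to `S`. Every set is closed in this sense for `n = 1`. -/
def IsSumClosed (n : ℕ) (S : Set M) : Prop :=
  ∀ s : Multiset M, s.card = n → (∀ x ∈ s, x ∈ S) → s.sum ∈ S

theorem isSumClosed_two_iff : IsSumClosed 2 S ↔ S + S ⊆ S := by
  constructor
  · rintro h _ ⟨x, hx, y, hy, rfl⟩
    simpa using h {x, y} rfl (by simp [hx, hy])
  · rintro h s hs hmem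
    obtain ⟨x, y, rfl⟩ := Multiset.card_eq_two.1 hs
    simpa using h (add_mem_add (hmem x (by simp)) (hmem y (by simp)))

theorem isSumClosed_three_iff : IsSumClosed 3 S ↔ S + S + S ⊆ S := by
  constructor
  · rintro h _ ⟨_, ⟨x, hx, y, hy, rfl⟩, z, hz, rfl⟩
    simpa [add_assoc] using h {x, y, z} rfl (by simp [hx, hy, hz])
  · rintro h s hs hmem
    obtain ⟨x, y, z, rfl⟩ := Multiset.card_eq_three.1 hs
    simpa [add_assoc] using
      h (add_mem_add (add_mem_add (hmem x (by simp)) (hmem y (by simp))) (hmem z (by simp)))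

theorem IsSumClosed.add_nsmul_mem (hS : IsSumClosed (m + 1) S) {x y : M} (hx : x ∈ S)
    (hy : y ∈ S) : x + m • y ∈ S := by
  simpa using hS (x ::ₘ .replicate m y) (by simp)
    (Multiset.forall_mem_cons.2 ⟨hx, fun _ hz => Multiset.eq_of_mem_replicate hz ▸ hy⟩)

theorem IsSumClosed.add_add_nsmul_mem (hS : IsSumClosed (m + 2) S) {x y z : M} (hx : x ∈ S)
    (hy : y ∈ S) (hz : z ∈ S) : x + y + m • z ∈ S := by
  simpa [add_assoc] using hS (x ::ₘ y ::ₘ .replicate m z) (by simp)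
    (Multiset.forall_mem_cons.2 ⟨hx, Multiset.forall_mem_cons.2
      ⟨hy, fun _ hw => Multiset.eq_of_mem_replicate hw ▸ hz⟩⟩)

theorem IsSumClosed.nsmul_mem (hS : IsSumClosed (m + 1) S) {x : M} (hx : x ∈ S) (k : ℕ) :
    (k * m + 1) • x ∈ S := by
  induction k with
  | zero => simpa using hx
  | succ k ih =>
    convert hS.add_nsmul_mem ih hx using 1
    rw [← add_nsmul]
    congr 1
    ring

end SumClosed

theorem IsSumClosed.interior_nonempty {G : Type*} [AddCommGroup G] [TopologicalSpace G]
    [ContinuousConstVAdd G G] {S : Set G} {m : ℕ} (hS : IsSumClosed (m + 2) S)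
    (hint : (interior (S + S)).Nonempty) : (interior S).Nonempty := by
  obtain ⟨z, hz⟩ : S.Nonempty := (hint.mono interior_subset).of_add_left
  have hsub : m • z +ᵥ interior (S + S) ⊆ S := by
    rintro _ ⟨s, hs, rfl⟩
    obtain ⟨x, hx, y, hy, rfl⟩ := interior_subset hs
    simpa [add_comm] using hS.add_add_nsmul_mem hx hy hz
  exact (hint.vadd_set (a := m • z)).mono (interior_maximal hsub (isOpen_interior.vadd _))

theorem IsSumClosed.frequently_mem_atTop {G : Type*} [AddCommGroup G] [LinearOrder G]
    [IsOrderedAddMonoid G] [Archimedean G] {S : Set G} {m : ℕ} (hm : 0 < m)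
    (hS : IsSumClosed (m + 1) S) {x : G} (hx : x ∈ S) (hx0 : 0 < x) : ∃ᶠ y in atTop, y ∈ S := by
  have hlim : Tendsto (fun k : ℕ => (k * m + 1) • x) atTop atTop :=
    (tendsto_atTop_mono (fun k => (Nat.le_mul_of_pos_right k hm).trans (Nat.le_succ _))
      tendsto_id).atTop_nsmul_const hx0
  exact hlim.frequently (Frequently.of_forall (hS.nsmul_mem hx))

section OrderedField

variable {K : Type*} [Field K] [LinearOrder K] [IsStrictOrderedRing K] [Archimedean K]

theorem exists_nat_mul_add_one_mem_Ioo {m u v : K} (hm : 0 < m) (hu : 1 ≤ u) (huv : u + m < v) :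
    ∃ k : ℕ, k * m + 1 ∈ Ioo u v := by
  let _ := Archimedean.floorRing K
  have hfloor_le : (⌊(u - 1) / m⌋₊ : K) * m ≤ u - 1 :=
    (le_div_iff₀ hm).1 (Nat.floor_le (div_nonneg (sub_nonneg.2 hu) hm.le))
  have hlt_floor : u - 1 < (⌊(u - 1) / m⌋₊ + 1 : K) * m :=
    (div_lt_iff₀ hm).1 (Nat.lt_floor_add_one _)
  refine ⟨⌊(u - 1) / m⌋₊ + 1, ?_, ?_⟩ <;> push_cast <;> linarith

theorem IsSumClosed.mem_atTop_of_Ioo_subset {S : Set K} {m : ℕ} (hm : 0 < m)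
    (hS : IsSumClosed (m + 1) S) {a b : K} (ha : 0 < a) (hab : a < b) (hsub : Ioo a b ⊆ S) :
    S ∈ atTop := by
  have hb : 0 < b := ha.trans hab
  filter_upwards [eventually_ge_atTop b, eventually_gt_atTop (m / (a⁻¹ - b⁻¹))] with y hby hy
  have hgap : y / b + m < y / a := by
    rw [div_lt_iff₀ (sub_pos.2 (inv_strictAnti₀ ha hab)), mul_sub] at hy
    simpa only [div_eq_mul_inv, lt_sub_iff_add_lt'] using hy
  obtain ⟨k, hbk, hka⟩ :=
    exists_nat_mul_add_one_mem_Ioo (Nat.cast_pos.2 hm) ((one_le_div₀ hb).2 hby) hgap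
  have hk : (0 : K) < k * m + 1 := by positivity
  have hmem : y / (k * m + 1) ∈ Ioo a b := ⟨(lt_div_comm₀ hk ha).1 hka, (div_lt_comm₀ hb hk).1 hbk⟩
  simpa [mul_div_cancel₀ y hk.ne'] using hS.nsmul_mem (hsub hmem) k

theorem IsSumClosed.mem_atTop_of_interior_nonempty [TopologicalSpace K] [OrderTopology K]
    {S : Set K} {m : ℕ} (hm : 0 < m) (hS : IsSumClosed (m + 1) S) (hpos : S ⊆ Ioi 0)
    (hint : (interior S).Nonempty) : S ∈ atTop := by
  obtain ⟨a, b, hab, hsub⟩ := isOpen_interior.exists_Ioo_subset hint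
  replace hsub : Ioo a b ⊆ S := hsub.trans interior_subset
  obtain ⟨c, hac, hcb⟩ := exists_between hab
  exact hS.mem_atTop_of_Ioo_subset hm (hpos (hsub ⟨hac, hcb⟩)) hcb
    ((Ioo_subset_Ioo_left hac.le).trans hsub)

end OrderedField

theorem nonempty_of_not_isMeagre_of_residualEq {X : Type*} [TopologicalSpace X] {s t : Set X}
    (hs : ¬ IsMeagre s) (hst : s =ᵇ t) : t.Nonempty := by
  rw [nonempty_iff_ne_empty]
  rintro rfl
  exact hs (eventuallyEq_empty.1 hst)

/-- **Piccard's theorem** for two sets. -/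
@[to_additive]
theorem interior_mul_nonempty_of_not_isMeagre {G : Type*} [Group G] [TopologicalSpace G]
    [IsTopologicalGroup G] [BaireSpace G] {E F : Set G} (hE : BaireMeasurableSet E)
    (hF : BaireMeasurableSet F) (hE₀ : ¬ IsMeagre E) (hF₀ : ¬ IsMeagre F) :
    (interior (E * F)).Nonempty := by
  obtain ⟨u, hu, hEu⟩ := hE.residualEq_isOpen
  obtain ⟨v, hv, hFv⟩ := hF.residualEq_isOpen
  have hu₀ : u.Nonempty := nonempty_of_not_isMeagre_of_residualEq hE₀ hEu
  have hv₀ : v.Nonempty := nonempty_of_not_isMeagre_of_residualEq hF₀ hFv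
  refine (hu₀.mul hv₀).mono (interior_maximal ?_ hu.mul_right)
  rintro _ ⟨x, hx, y, hy, rfl⟩
  let reflect : G ≃ₜ G := (Homeomorph.inv G).trans (Homeomorph.mulRight (x * y))
  have hFreflect : ∀ᵇ z, reflect z ∈ F ↔ reflect z ∈ v :=
    (tendsto_residual_of_isOpenMap reflect.continuous reflect.isOpenMap).eventually hFv.mem_iff
  obtain ⟨z, ⟨hzu, hzv⟩, hzE, hzF⟩ :=
    (dense_of_mem_residual (hEu.mem_iff.and hFreflect)).inter_open_nonempty (u ∩ reflect ⁻¹' v)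
      (hu.inter (hv.preimage reflect.continuous)) ⟨x, hx, by simpa [reflect] using hy⟩
  exact ⟨z, hzE.2 hzu, reflect z, hzF.2 hzv, mul_inv_cancel_left z (x * y)⟩

section Steinhaus

variable {G : Type*} [Group G] [MeasurableSpace G] {E F : Set G}

@[to_additive]
theorem exists_measure_inter_preimage_inv_mul_ne_zero [MeasurableMul₂ G] [MeasurableInv G]
    {μ : Measure G} [SFinite μ] [μ.IsMulLeftInvariant] (hE : MeasurableSet E)
    (hF : MeasurableSet F) (hE₀ : μ E ≠ 0) (hF₀ : μ F ≠ 0) :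
    ∃ t, μ (E ∩ (fun y => y⁻¹ * t) ⁻¹' F) ≠ 0 := by
  by_contra! hnull
  have hshear := measurePreserving_prod_inv_mul_swap μ μ
  have hprod : (μ.prod μ) (E ×ˢ F) = 0 := by
    rw [← hshear.measure_preimage (hE.prod hF).nullMeasurableSet,
      Measure.measure_prod_null (hshear.measurable (hE.prod hF))]
    exact .of_forall hnull
  rw [Measure.prod_prod] at hprod
  exact mul_ne_zero hE₀ hF₀ hprod

/-- **Steinhaus' theorem** for two sets. -/
@[to_additive]
theorem interior_mul_nonempty_of_measure_ne_zero [TopologicalSpace G] [IsTopologicalGroup G]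
    [LocallyCompactSpace G] [SecondCountableTopology G] [BorelSpace G] {μ : Measure G}
    [μ.IsHaarMeasure] (hE : NullMeasurableSet E μ) (hF : NullMeasurableSet F μ)
    (hE₀ : μ E ≠ 0) (hF₀ : μ F ≠ 0) : (interior (E * F)).Nonempty := by
  obtain ⟨E₁, hE₁E, hE₁, hEE₁⟩ := hE.exists_measurable_subset_ae_eq
  obtain ⟨F₁, hF₁F, hF₁, hFF₁⟩ := hF.exists_measurable_subset_ae_eq
  obtain ⟨t, ht⟩ := exists_measure_inter_preimage_inv_mul_ne_zero hE₁ hF₁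
    (measure_congr hEE₁ ▸ hE₀) (measure_congr hFF₁ ▸ hF₀)
  have hnhds := Measure.div_mem_nhds_one_of_haar_pos μ (E₁ ∩ (fun y => y⁻¹ * t) ⁻¹' F₁)
    (hE₁.inter ((measurable_inv.mul_const t) hF₁)) (pos_iff_ne_zero.2 ht)
  have htend : Tendsto (fun s => s / t) (𝓝 t) (𝓝 1) :=
    (continuous_div_right' t).tendsto' t 1 (div_self' t)
  refine ⟨t, mem_interior_iff_mem_nhds.2 ?_⟩
  filter_upwards [htend hnhds] with s ⟨x, hx, y, hy, hxy⟩
  have hs : x * (y⁻¹ * t) = s := by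
    rw [← mul_assoc, ← div_eq_mul_inv, show x / y = s / t from hxy, div_mul_cancel]
  exact hs ▸ mul_mem_mul (hE₁E hx.1) (hF₁F hy.2)

end Steinhaus

theorem stmt_4_general {ι : Type*} (B : ι → Set ℝ)
    (hnull : ∀ i, NullMeasurableSet (B i)) (hbaire : ∀ i, BaireMeasurableSet (B i))
    (hdisj : Pairwise (Function.onFun Disjoint B))
    (hcover : (⋃ i, B i) = Ioi (0 : ℝ))
    (hsum : ∀ i, ∃ n, 2 ≤ n ∧ IsSumClosed n (B i)) :
    (∀ i, volume (B i) = 0 ∧ IsMeagre (B i)) ∨ ∃ i₁, B i₁ = Ioi (0 : ℝ) := by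
  have hpos : ∀ i, B i ⊆ Ioi 0 := fun i => hcover ▸ subset_iUnion B i
  replace hsum : ∀ i, ∃ m, IsSumClosed (m + 2) (B i) := fun i => by
    obtain ⟨n, hn, hB⟩ := hsum i
    exact ⟨n - 2, by rwa [Nat.sub_add_cancel hn]⟩
  refine or_iff_not_imp_left.2 fun hnot => ?_
  obtain ⟨i, hi⟩ := not_forall.1 hnot
  have hint : (interior (B i + B i)).Nonempty := by
    rcases not_and_or.1 hi with h | h
    · exact interior_add_nonempty_of_measure_ne_zero (hnull i) (hnull i) h h
    · exact interior_add_nonempty_of_not_isMeagre (hbaire i) (hbaire i) h h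
  obtain ⟨m, hm⟩ := hsum i
  have htop : B i ∈ atTop :=
    hm.mem_atTop_of_interior_nonempty m.succ_pos (hpos i) (hm.interior_nonempty hint)
  refine ⟨i, (hpos i).antisymm fun x hx => ?_⟩
  obtain ⟨j, hj⟩ := mem_iUnion.1 (hcover ▸ hx)
  obtain ⟨l, hl⟩ := hsum j
  obtain ⟨y, hyj, hyi⟩ := ((hl.frequently_mem_atTop l.succ_pos hj hx).and_eventually htop).exists
  have hij : i = j := hdisj.eq (not_disjoint_iff.2 ⟨y, hyi, hyj⟩)
  exact hij ▸ hj

/-- If `(0, ∞)` is partitioned into Borel sets `B i`, each satisfying `B i + B i ⊆ B i` or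
`B i + B i + B i ⊆ B i`, then either every `B i` is Lebesgue null and meager, or some
`B i₁ = (0, ∞)`. -/
theorem stmt_4 {ι : Type*} (B : ι → Set ℝ)
    (hmeas : ∀ i, MeasurableSet (B i))
    (hdisj : Pairwise (Function.onFun Disjoint B))
    (hcover : (⋃ i, B i) = Set.Ioi (0 : ℝ))
    (hsg : ∀ i, B i + B i ⊆ B i ∨ B i + B i + B i ⊆ B i) :
    (∀ i, MeasureTheory.volume (B i) = 0 ∧ IsMeagre (B i)) ∨
      ∃ i₁, B i₁ = Set.Ioi (0 : ℝ) :=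
  stmt_4_general B (fun i => (hmeas i).nullMeasurableSet) (fun i => (hmeas i).baireMeasurableSet)
    hdisj hcover fun i => (hsg i).elim
      (fun h => ⟨2, le_rfl, isSumClosed_two_iff.2 h⟩)
      (fun h => ⟨3, by simp, isSumClosed_three_iff.2 h⟩)
end

section
/- Suppose (A_i)_{i ∈ I} is a family of pairwise disjoint Borel subsets of ℝ whose union is ℝ, and each A_i is closed under addition. Then every A_i either has Lebesgue measure zero and is meager, or is equal to one of the sets ℝ, (-∞, 0), (-∞, 0], (0, ∞), [0, ∞). -/
/-!
A part of the partition is closed under multiplication by positive rationals: if `x ∈ A i` and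
`(m / n) • x ∈ A j`, then `m • x` lies in both `A i` and `A j`, so `i = j`. Each part is thus a
convex cone over `ℚ`. If such a cone `C` is not null or not meagre, then `C + C ⊆ C` has interior
by the theorems of Steinhaus and Pettis, and by density of `ℚ` the positive real multiples of an
interior point stay in `C`. So `C` contains an open half-line, and an additively closed set of reals
containing `(0, ∞)` and a negative number is everything.
-/

open MeasureTheory Set Filter Topology
open scoped Pointwise

section Steinhaus

variable {G : Type*} [AddGroup G] [MeasurableSpace G] [MeasurableAdd₂ G]

theorem measure_mul_measure_eq_lintegral_measure_inter [MeasurableNeg G] (μ ν : Measure G)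
    [SFinite μ] [SFinite ν] [ν.IsAddLeftInvariant] {E F : Set G} (hE : MeasurableSet E)
    (hF : MeasurableSet F) : μ E * ν F = ∫⁻ t, μ (E ∩ {x | -x + t ∈ F}) ∂ν := by
  have hS : MeasurableSet {p : G × G | p.1 ∈ E ∧ -p.1 + p.2 ∈ F} :=
    (measurable_fst hE).inter ((measurable_fst.neg.add measurable_snd) hF)
  have hpre : (fun p : G × G ↦ (p.1, p.1 + p.2)) ⁻¹' {p | p.1 ∈ E ∧ -p.1 + p.2 ∈ F} = E ×ˢ F := by
    ext ⟨x, y⟩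
    simp
  calc
    μ E * ν F = μ.prod ν (E ×ˢ F) := (Measure.prod_prod E F).symm
    _ = μ.prod ν {p | p.1 ∈ E ∧ -p.1 + p.2 ∈ F} := by
      rw [← hpre, (measurePreserving_prod_add μ ν).measure_preimage hS.nullMeasurableSet]
    _ = ∫⁻ t, μ (E ∩ {x | -x + t ∈ F}) ∂ν := Measure.prod_apply_symm hS

/-- **Steinhaus theorem** for sums. Some `D = E ∩ (t - F)` has positive measure, and
`(D - D) + t ⊆ E + F`. -/
theorem nonempty_interior_add_of_addHaar_ne_zero [TopologicalSpace G] [IsTopologicalAddGroup G]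
    [LocallyCompactSpace G] [BorelSpace G] (μ : Measure G) [μ.IsAddHaarMeasure] [SFinite μ]
    [μ.InnerRegular] {E F : Set G} (hE : NullMeasurableSet E μ) (hF : NullMeasurableSet F μ)
    (hμE : μ E ≠ 0) (hμF : μ F ≠ 0) : (interior (E + F)).Nonempty := by
  obtain ⟨E', hE'E, hE', hEE'⟩ := hE.exists_measurable_subset_ae_eq
  obtain ⟨F', hF'F, hF', hFF'⟩ := hF.exists_measurable_subset_ae_eq
  obtain ⟨t, ht⟩ : ∃ t, μ (E' ∩ {x | -x + t ∈ F'}) ≠ 0 := by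
    by_contra! hnull
    have hprod := measure_mul_measure_eq_lintegral_measure_inter μ μ hE' hF'
    simp only [hnull, lintegral_zero, measure_congr hEE', measure_congr hFF'] at hprod
    exact mul_ne_zero hμE hμF hprod
  have hdiff := Measure.sub_mem_nhds_zero_of_addHaar_pos μ _
    (hE'.inter ((measurable_neg.add_const t) hF')) (pos_iff_ne_zero.2 ht)
  have hsub : Tendsto (fun s ↦ s - t) (𝓝 t) (𝓝 0) := tendsto_sub_nhds_zero_iff.2 tendsto_id
  refine ⟨t, mem_interior_iff_mem_nhds.2 ?_⟩
  filter_upwards [hsub hdiff] with s ⟨x, ⟨hx, _⟩, y, ⟨_, hy⟩, (hxy : x - y = s - t)⟩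
  have hs : x + (-y + t) = s := by rw [← add_assoc, ← sub_eq_add_neg, hxy, sub_add_cancel]
  exact hs ▸ add_mem_add (hE'E hx) (hF'F hy)

end Steinhaus

section Pettis

theorem exists_isOpen_nonempty_residualEq_of_not_isMeagre {X : Type*} [TopologicalSpace X]
    {E : Set X} (hE : BaireMeasurableSet E) (hE' : ¬ IsMeagre E) :
    ∃ U, IsOpen U ∧ U.Nonempty ∧ E =ᶠ[residual X] U := by
  obtain ⟨U, hU, hEU⟩ := hE.residualEq_isOpen
  refine ⟨U, hU, nonempty_iff_ne_empty.2 ?_, hEU⟩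
  rintro rfl
  exact hE' (eventuallyEq_empty.1 hEU)

variable {G : Type*} [AddGroup G] [TopologicalSpace G] [IsTopologicalAddGroup G] [BaireSpace G]
  {E F U V : Set G}

theorem add_subset_add_of_residualEq (hU : IsOpen U) (hV : IsOpen V) (hEU : E =ᶠ[residual G] U)
    (hFV : F =ᶠ[residual G] V) : U + V ⊆ E + F := by
  rintro _ ⟨u, hu, v, hv, rfl⟩
  have hrefl : Tendsto (fun x ↦ u + v - x) (residual G) (residual G) :=
    (Homeomorph.subLeft (u + v)).residual_map_eq.le
  have hres : ∀ᶠ x in residual G, (x ∈ F ↔ x ∈ V) ∧ (u + v - x ∈ E ↔ u + v - x ∈ U) :=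
    hFV.mem_iff.and (hrefl.eventually hEU.mem_iff)
  obtain ⟨x, ⟨hxV, hxU⟩, hxF, hxE⟩ := (dense_of_mem_residual hres).inter_open_nonempty
    (V ∩ (fun x ↦ u + v - x) ⁻¹' U) (hV.inter (hU.preimage (by fun_prop))) ⟨v, hv, by simpa⟩
  exact ⟨u + v - x, hxE.2 hxU, x, hxF.2 hxV, sub_add_cancel _ _⟩

/-- **Pettis theorem** for sums. -/
theorem nonempty_interior_add_of_not_isMeagre (hE : BaireMeasurableSet E)
    (hF : BaireMeasurableSet F) (hE' : ¬ IsMeagre E) (hF' : ¬ IsMeagre F) :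
    (interior (E + F)).Nonempty := by
  obtain ⟨U, hU, hUne, hEU⟩ := exists_isOpen_nonempty_residualEq_of_not_isMeagre hE hE'
  obtain ⟨V, hV, hVne, hFV⟩ := exists_isOpen_nonempty_residualEq_of_not_isMeagre hF hF'
  exact (hUne.add hVne).mono
    (interior_maximal (add_subset_add_of_residualEq hU hV hEU hFV) hV.add_left)

end Pettis

theorem nsmul_mem_of_add_subset {M : Type*} [AddMonoid M] {S : Set M} (hS : S + S ⊆ S) {x : M}
    (hx : x ∈ S) {n : ℕ} (hn : 0 < n) : n • x ∈ S := by
  induction n, hn using Nat.le_induction with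
  | base => rwa [one_nsmul]
  | succ n _ ih =>
    rw [succ_nsmul]
    exact hS (add_mem_add ih hx)

theorem coe_add_self_subset {M σ : Type*} [Add M] [SetLike σ M] [AddMemClass σ M] (S : σ) :
    (S + S : Set M) ⊆ S :=
  add_subset_iff.2 fun _ hx _ hy ↦ add_mem hx hy

section OrderedGroup

variable {G : Type*} [AddCommGroup G] [LinearOrder G] [IsOrderedAddMonoid G] [Archimedean G]
  {S : Set G}

theorem eq_univ_of_Ioi_subset_of_mem_of_neg (hS : S + S ⊆ S) (hpos : Ioi 0 ⊆ S) {x : G}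
    (hxS : x ∈ S) (hx : x < 0) : S = univ := by
  refine eq_univ_of_forall fun y ↦ ?_
  obtain ⟨n, hn⟩ := exists_lt_nsmul (neg_pos.2 hx) |y|
  have hn0 : 0 < n := by
    rw [Nat.pos_iff_ne_zero]
    rintro rfl
    exact (abs_nonneg y).not_gt (by rwa [zero_nsmul] at hn)
  have hlt : n • x < y := neg_lt_neg_iff.1 ((neg_le_abs y).trans_lt (by rwa [← smul_neg]))
  simpa using hS (add_mem_add (nsmul_mem_of_add_subset hS hxS hn0) (hpos (sub_pos.2 hlt)))

theorem eq_univ_or_Ioi_or_Ici_of_Ioi_subset (hS : S + S ⊆ S) (hpos : Ioi 0 ⊆ S) :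
    S = univ ∨ S = Ioi 0 ∨ S = Ici 0 := by
  by_cases hneg : ∃ x ∈ S, x < 0
  · obtain ⟨x, hxS, hx⟩ := hneg
    exact .inl (eq_univ_of_Ioi_subset_of_mem_of_neg hS hpos hxS hx)
  · push Not at hneg
    right
    by_cases h0 : (0 : G) ∈ S
    · exact .inr (Subset.antisymm hneg
        (Ioi_union_left.symm.subset.trans (union_subset hpos (singleton_subset_iff.2 h0))))
    · exact .inl (Subset.antisymm
        (fun x hx ↦ (hneg x hx).lt_of_ne (ne_of_mem_of_not_mem hx h0).symm) hpos)

theorem eq_univ_or_Iio_or_Iic_of_Iio_subset (hS : S + S ⊆ S) (hneg : Iio 0 ⊆ S) :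
    S = univ ∨ S = Iio 0 ∨ S = Iic 0 :=
  eq_univ_or_Ioi_or_Ici_of_Ioi_subset (G := Gᵒᵈ) hS hneg

end OrderedGroup

theorem rat_smul_mem_of_partition {V ι : Type*} [AddCommMonoid V] [Module ℚ V] {A : ι → Set V}
    (hdisj : Pairwise (Function.onFun Disjoint A)) (hcover : ⋃ i, A i = univ)
    (hadd : ∀ i, A i + A i ⊆ A i) {i : ι} {q : ℚ} (hq : 0 < q) {x : V} (hx : x ∈ A i) :
    q • x ∈ A i := by
  lift q to ℚ≥0 using hq.le
  obtain ⟨j, hj⟩ := mem_iUnion.1 (hcover ▸ mem_univ ((q : ℚ) • x))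
  have hnum : q.den • (q : ℚ) • x = q.num • x := by
    have hq' : (q.den * q : ℚ) = q.num := by exact_mod_cast q.den_mul_eq_num
    rw [← Nat.cast_smul_eq_nsmul ℚ, smul_smul, hq', Nat.cast_smul_eq_nsmul]
  have hi : q.num • x ∈ A i := nsmul_mem_of_add_subset (hadd i) hx (NNRat.num_pos.2 hq)
  have hj' : q.num • x ∈ A j := hnum ▸ nsmul_mem_of_add_subset (hadd j) hj q.den_pos
  exact hdisj.eq (not_disjoint_iff.2 ⟨_, hi, hj'⟩) ▸ hj

/-- A part of a partition of a rational vector space into additively closed sets, as a convex cone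
over `ℚ`. Convex cones in the sense of `ConvexCone` may be empty and need not contain `0`. -/
def partitionCone {V ι : Type*} [AddCommMonoid V] [Module ℚ V] (A : ι → Set V)
    (hdisj : Pairwise (Function.onFun Disjoint A)) (hcover : ⋃ i, A i = univ)
    (hadd : ∀ i, A i + A i ⊆ A i) (i : ι) : ConvexCone ℚ V where
  carrier := A i
  smul_mem' _ hq _ hx := rat_smul_mem_of_partition hdisj hcover hadd hq hx
  add_mem' _ hx _ hy := hadd i (add_mem_add hx hy)

theorem smul_mem_of_mem_interior {V : Type*} [AddCommGroup V] [Module ℝ V] [Module ℚ V]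
    [TopologicalSpace V] [ContinuousSMul ℝ V] {C : ConvexCone ℚ V} {c : V}
    (hc : c ∈ interior (C : Set V)) {t : ℝ} (ht : 0 < t) : t • c ∈ C := by
  have hcont : Continuous fun s : ℝ ↦ s • t • c := by fun_prop
  obtain ⟨-, ⟨hqC, hq⟩, q, rfl⟩ := Rat.denseRange_cast (𝕜 := ℝ).inter_open_nonempty
    ((fun s : ℝ ↦ s • t • c) ⁻¹' interior (C : Set V) ∩ Ioi 0)
    ((isOpen_interior.preimage hcont).inter isOpen_Ioi)
    ⟨t⁻¹, by simpa [ht.ne'] using hc, inv_pos.2 ht⟩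
  have hqC' : q • t • c ∈ C := by
    rw [← Rat.cast_smul_eq_qsmul ℝ]
    exact interior_subset hqC
  exact (C.smul_mem_iff (Rat.cast_pos.1 (mem_Ioi.1 hq))).1 hqC'

theorem Ioi_subset_or_Iio_subset_of_nonempty_interior {C : ConvexCone ℚ ℝ}
    (hC : (interior (C : Set ℝ)).Nonempty) : Ioi 0 ⊆ (C : Set ℝ) ∨ Iio 0 ⊆ (C : Set ℝ) := by
  obtain ⟨c, hc, hc0⟩ := (dense_compl_singleton (0 : ℝ)).inter_open_nonempty _ isOpen_interior hC
  have mem_of_div_pos {x : ℝ} (hx : 0 < x / c) : x ∈ C := by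
    simpa [div_mul_cancel₀ x hc0] using smul_mem_of_mem_interior hc hx
  rcases lt_or_gt_of_ne hc0 with hneg | hpos
  · exact .inr fun x hx ↦ mem_of_div_pos (div_pos_of_neg_of_neg hx hneg)
  · exact .inl fun x hx ↦ mem_of_div_pos (div_pos hx hpos)

theorem eq_univ_or_halfLine_of_nonempty_interior {C : ConvexCone ℚ ℝ}
    (hC : (interior (C : Set ℝ)).Nonempty) :
    (C : Set ℝ) = univ ∨ (C : Set ℝ) = Iio 0 ∨ (C : Set ℝ) = Iic 0 ∨
      (C : Set ℝ) = Ioi 0 ∨ (C : Set ℝ) = Ici 0 := by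
  rcases Ioi_subset_or_Iio_subset_of_nonempty_interior hC with hpos | hneg
  · have := eq_univ_or_Ioi_or_Ici_of_Ioi_subset (coe_add_self_subset C) hpos
    tauto
  · have := eq_univ_or_Iio_or_Iic_of_Iio_subset (coe_add_self_subset C) hneg
    tauto

theorem stmt_5_general (C : ConvexCone ℚ ℝ) (hnull : NullMeasurableSet (C : Set ℝ))
    (hbaire : BaireMeasurableSet (C : Set ℝ)) :
    (volume (C : Set ℝ) = 0 ∧ IsMeagre (C : Set ℝ)) ∨
      (C : Set ℝ) = univ ∨ (C : Set ℝ) = Iio 0 ∨ (C : Set ℝ) = Iic 0 ∨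
      (C : Set ℝ) = Ioi 0 ∨ (C : Set ℝ) = Ici 0 := by
  refine or_iff_not_imp_left.2 fun hlarge ↦ eq_univ_or_halfLine_of_nonempty_interior <|
    Nonempty.mono (interior_mono (coe_add_self_subset C)) ?_
  rcases not_and_or.1 hlarge with hpos | hmeagre
  · exact nonempty_interior_add_of_addHaar_ne_zero volume hnull hnull hpos hpos
  · exact nonempty_interior_add_of_not_isMeagre hbaire hbaire hmeagre hmeagre

/-- If `ℝ` is partitioned into Borel sets `A i`, each closed under addition, then every `A i`
either is Lebesgue null and meager, or equals one of `ℝ`, `(-∞,0)`, `(-∞,0]`, `(0,∞)`, `[0,∞)`. -/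
theorem stmt_5 {ι : Type*} (A : ι → Set ℝ)
    (hmeas : ∀ i, MeasurableSet (A i))
    (hdisj : Pairwise (Function.onFun Disjoint A))
    (hcover : (⋃ i, A i) = Set.univ)
    (hadd : ∀ i, ∀ x ∈ A i, ∀ y ∈ A i, x + y ∈ A i) :
    ∀ i, (MeasureTheory.volume (A i) = 0 ∧ IsMeagre (A i)) ∨
      A i = Set.univ ∨ A i = Set.Iio (0 : ℝ) ∨ A i = Set.Iic (0 : ℝ) ∨
      A i = Set.Ioi (0 : ℝ) ∨ A i = Set.Ici (0 : ℝ) :=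
  fun i ↦ stmt_5_general (partitionCone A hdisj hcover (fun j ↦ add_subset_iff.2 (hadd j)) i)
    (hmeas i).nullMeasurableSet (hmeas i).baireMeasurableSet
end

section
/- Suppose (M_i)_{i ∈ I} is a family of pairwise disjoint Borel subsets of ℝ whose union is ℝ, and each M_i is closed under multiplication. Then every M_i either has Lebesgue measure zero and is meager, or is the union of some subfamily of the four sets (-1, 0) ∪ (0, 1), (-∞, -1) ∪ (1, ∞), {-1, 1}, and {0}. -/
/-!
A block `M` of a partition of `ℝ` into multiplicatively closed sets contains `x` as soon as it
contains a positive power of `x`, since the powers of `x` stay in the block of `x`. Hence `M` is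
symmetric under negation and the logarithms of its positive elements form a convex cone `C` over
`ℚ`. By the theorems of Steinhaus and Pettis, `C + C ⊆ C` has an interior point if `C` is
non-null and measurable, or non-meagre with the Baire property. A rational cone in `ℝ` with an
interior point contains each open half-line that it meets: translating along the cone brings the
open set into the half-line, and its positive rational multiples then cover the half-line.
-/

open MeasureTheory Set Topology Filter
open scoped Pointwise

section Sumset

variable {G : Type*} [Group G]

@[to_additive]
theorem exists_measure_inter_preimage_inv_mul_ne_zero_s7 [MeasurableSpace G] [MeasurableMul₂ G]
    [MeasurableInv G] {μ : Measure G} [SFinite μ] [μ.IsMulLeftInvariant] {s t : Set G}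
    (hs : MeasurableSet s) (ht : MeasurableSet t) (hμs : μ s ≠ 0) (hμt : μ t ≠ 0) :
    ∃ g, μ (s ∩ (fun x ↦ x⁻¹ * g) ⁻¹' t) ≠ 0 := by
  by_contra! hnull
  have hprod : (μ.prod μ) ((fun z : G × G ↦ (z.2, z.2⁻¹ * z.1)) ⁻¹' s ×ˢ t) = 0 :=
    Measure.measure_prod_null_of_ae_null (by measurability) (.of_forall hnull)
  rw [(measurePreserving_prod_inv_mul_swap μ μ).measure_preimage (hs.prod ht).nullMeasurableSet,
    Measure.prod_prod] at hprod
  exact mul_ne_zero hμs hμt hprod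

variable [TopologicalSpace G] [IsTopologicalGroup G]

-- If `k = s ∩ g • t⁻¹` has positive measure, then `s * t` contains the translate by `g` of `k / k`,
-- to which the library version of the theorem of Steinhaus applies.
@[to_additive]
theorem nonempty_interior_mul_of_measure_ne_zero [LocallyCompactSpace G]
    [SecondCountableTopology G] [MeasurableSpace G] [BorelSpace G] {μ : Measure G}
    [μ.IsHaarMeasure] {s t : Set G} (hs : NullMeasurableSet s μ)
    (ht : NullMeasurableSet t μ) (hμs : μ s ≠ 0) (hμt : μ t ≠ 0) :
    (interior (s * t)).Nonempty := by
  obtain ⟨s', hs's, hs', hss'⟩ := hs.exists_measurable_subset_ae_eq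
  obtain ⟨t', ht't, ht', htt'⟩ := ht.exists_measurable_subset_ae_eq
  rw [← measure_congr hss'] at hμs
  rw [← measure_congr htt'] at hμt
  obtain ⟨g, hg⟩ := exists_measure_inter_preimage_inv_mul_ne_zero_s7 hs' ht' hμs hμt
  let k := s' ∩ (fun x ↦ x⁻¹ * g) ⁻¹' t'
  have hkm : MeasurableSet k := hs'.inter (ht'.preimage (by fun_prop))
  have hnhds : (fun x ↦ x * g⁻¹) ⁻¹' (k / k) ∈ 𝓝 g :=
    (continuous_mul_const g⁻¹).continuousAt.preimage_mem_nhds <| by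
      simpa using Measure.div_mem_nhds_one_of_haar_pos μ k hkm (pos_iff_ne_zero.2 hg)
  refine ⟨g, mem_interior_iff_mem_nhds.2 (mem_of_superset hnhds ?_)⟩
  rintro z ⟨x, hx, y, hy, hxy⟩
  exact ⟨x, hs's hx.1, y⁻¹ * g, ht't hy.2, by
    dsimp only at hxy ⊢
    rw [← mul_assoc, ← div_eq_mul_inv, hxy, inv_mul_cancel_right]⟩

@[to_additive]
theorem nonempty_interior_mul_of_not_isMeagre [BaireSpace G] {s t : Set G}
    (hs : BaireMeasurableSet s) (ht : BaireMeasurableSet t) (hs' : ¬ IsMeagre s)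
    (ht' : ¬ IsMeagre t) : (interior (s * t)).Nonempty := by
  have exists_open {a : Set G} (ha : BaireMeasurableSet a) (ha' : ¬ IsMeagre a) :
      ∃ u, IsOpen u ∧ u.Nonempty ∧ a =ᶠ[residual G] u := by
    obtain ⟨u, hu, hau⟩ := ha.residualEq_isOpen
    refine ⟨u, hu, nonempty_iff_ne_empty.2 ?_, hau⟩
    rintro rfl
    exact ha' (eventuallyEq_empty.1 hau)
  obtain ⟨u, hu, hu₀, hsu⟩ := exists_open hs hs'
  obtain ⟨v, hv, hv₀, htv⟩ := exists_open ht ht'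
  refine (hu₀.mul hv₀).mono (interior_maximal ?_ hu.mul_right)
  rintro _ ⟨x, hx, y, hy, rfl⟩
  let e : G ≃ₜ G := (Homeomorph.inv G).trans (Homeomorph.mulRight (x * y))
  have hte : ∀ᶠ z in residual G, e z ∈ t ↔ e z ∈ v :=
    (tendsto_residual_of_isOpenMap e.continuous e.isOpenMap).eventually htv.mem_iff
  obtain ⟨z, ⟨hzu, hzv⟩, hzs, hzt⟩ :=
    (dense_of_mem_residual (hsu.mem_iff.and hte)).inter_open_nonempty
      (u ∩ e ⁻¹' v) (hu.inter (hv.preimage e.continuous)) ⟨x, hx, by simpa [e] using hy⟩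
  exact ⟨z, hzs.2 hzu, e z, hzt.2 hzv, by simp [e]⟩

end Sumset

section RationalCone

variable {𝕜 : Type*} [Field 𝕜] [LinearOrder 𝕜] [IsStrictOrderedRing 𝕜] [Archimedean 𝕜]
  [TopologicalSpace 𝕜] [OrderTopology 𝕜] {C : ConvexCone ℚ 𝕜} {x : 𝕜}

theorem exists_pos_rat_smul_mem_of_isOpen {u : Set 𝕜} (hu : IsOpen u) {y : 𝕜} (hx : 0 < x)
    (hxu : x ∈ u) (hy : 0 < y) : ∃ q : ℚ, 0 < q ∧ q • y ∈ u := by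
  obtain ⟨q, hqu, hq⟩ := (Rat.denseRange_cast (𝕜 := 𝕜)).exists_mem_open
    ((hu.preimage (continuous_mul_const y)).inter isOpen_Ioi)
    ⟨x / y, by simpa [hy.ne'] using hxu, div_pos hx hy⟩
  exact ⟨q, Rat.cast_pos.1 hq, by simpa [Rat.smul_def] using hqu⟩

theorem Ioi_zero_subset_convexCone (hC : (interior (C : Set 𝕜)).Nonempty) (hx : 0 < x)
    (hxC : x ∈ C) : Ioi 0 ⊆ (C : Set 𝕜) := by
  intro y hy
  obtain ⟨u, hu⟩ := hC
  obtain ⟨n, hn⟩ := exists_lt_nsmul hx (max 0 (-u))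
  obtain ⟨hn₀, hnu⟩ := max_lt_iff.1 hn
  have hnx : n • x ∈ C := by
    have hn' : n ≠ 0 := by rintro rfl; simp at hn₀
    rw [← Nat.cast_smul_eq_nsmul ℚ]
    exact C.smul_mem (by positivity) hxC
  have hmem : n • x + u ∈ interior (C : Set 𝕜) :=
    interior_mono (add_subset_iff.2 fun a ha b hb ↦ C.add_mem ha hb)
      (subset_interior_add_right (add_mem_add hnx hu))
  obtain ⟨q, hq, hqy⟩ :=
    exists_pos_rat_smul_mem_of_isOpen isOpen_interior (by linarith) hmem hy
  simpa [smul_smul, hq.ne'] using C.smul_mem (inv_pos.2 hq) (interior_subset hqy)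

theorem Iio_zero_subset_convexCone (hC : (interior (C : Set 𝕜)).Nonempty) (hx : x < 0)
    (hxC : x ∈ C) : Iio 0 ⊆ (C : Set 𝕜) := by
  have hneg : (interior (C.comap (-LinearMap.id) : Set 𝕜)).Nonempty := by
    have := (Homeomorph.neg 𝕜).preimage_interior (C : Set 𝕜)
    obtain ⟨u, hu⟩ := hC
    exact ⟨-u, this.subset (by simpa using hu)⟩
  intro y hy
  simpa using Ioi_zero_subset_convexCone hneg (neg_pos.2 hx) (by simpa using hxC) (neg_pos.2 hy)

end RationalCone

/-- An isolated subsemigroup of a monoid: a set closed under multiplication that contains every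
`x` having a positive power in it. It need not contain `1`. The blocks of a partition into
multiplicatively closed sets are isolated subsemigroups. -/
structure IsIsolatedSubsemigroup {G : Type*} [Monoid G] (s : Set G) : Prop where
  mul_mem ⦃x y : G⦄ : x ∈ s → y ∈ s → x * y ∈ s
  mem_of_pow_mem ⦃x : G⦄ ⦃n : ℕ⦄ : n ≠ 0 → x ^ n ∈ s → x ∈ s

theorem pow_mem_of_mul_mem {G : Type*} [Monoid G] {s : Set G}
    (hs : ∀ x ∈ s, ∀ y ∈ s, x * y ∈ s) {x : G} (hx : x ∈ s) {n : ℕ} (hn : n ≠ 0) :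
    x ^ n ∈ s := by
  induction n, Nat.one_le_iff_ne_zero.2 hn using Nat.le_induction with
  | base => simpa using hx
  | succ n hn ih => simpa only [pow_succ] using hs _ (ih (by omega)) _ hx

theorem isIsolatedSubsemigroup_of_partition {G ι : Type*} [Monoid G] {M : ι → Set G}
    (hdisj : Pairwise (Function.onFun Disjoint M)) (hcover : (⋃ i, M i) = univ)
    (hmul : ∀ i, ∀ x ∈ M i, ∀ y ∈ M i, x * y ∈ M i) (i : ι) :
    IsIsolatedSubsemigroup (M i) where
  mul_mem x y hx hy := hmul i x hx y hy
  mem_of_pow_mem x n hn hxn := by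
    obtain ⟨j, hj⟩ := mem_iUnion.1 (hcover ▸ mem_univ x)
    obtain rfl : j = i := hdisj.eq <| not_disjoint_iff.2
      ⟨x ^ n, pow_mem_of_mul_mem (hmul j) hj hn, hxn⟩
    exact hj

namespace IsIsolatedSubsemigroup

theorem pow_mem {G : Type*} [Monoid G] {s : Set G} (hs : IsIsolatedSubsemigroup s) {x : G}
    (hx : x ∈ s) {n : ℕ} (hn : n ≠ 0) : x ^ n ∈ s :=
  pow_mem_of_mul_mem (fun _ hx _ hy ↦ hs.mul_mem hx hy) hx hn

theorem neg_mem {R : Type*} [Monoid R] [HasDistribNeg R] {s : Set R}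
    (hs : IsIsolatedSubsemigroup s) {x : R} (hx : x ∈ s) : -x ∈ s :=
  hs.mem_of_pow_mem two_ne_zero (by simpa only [neg_sq] using hs.pow_mem hx two_ne_zero)

variable {M : Set ℝ}

/-- The logarithms of the positive elements of an isolated subsemigroup `M` of `ℝ`, as a convex
cone over `ℚ`: products become sums, and powers and roots become rational multiples. -/
def logCone (hM : IsIsolatedSubsemigroup M) : ConvexCone ℚ ℝ where
  carrier := Real.exp ⁻¹' M
  smul_mem' q hq x hx := by
    lift q to ℚ≥0 using hq.le
    have hnum : q.num ≠ 0 := NNRat.num_ne_zero.2 (by rintro rfl; simp at hq)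
    have hpow : Real.exp ((q : ℚ) • x) ^ q.den = Real.exp x ^ q.num := by
      rw [← Real.exp_nat_mul, ← Real.exp_nat_mul, Rat.smul_def, ← mul_assoc]
      congr 2
      exact_mod_cast NNRat.den_mul_eq_num q
    exact hM.mem_of_pow_mem q.den_ne_zero (hpow ▸ hM.pow_mem hx hnum)
  add_mem' x hx y hy := by
    simpa only [mem_preimage, Real.exp_add] using hM.mul_mem hx hy

theorem mem_logCone (hM : IsIsolatedSubsemigroup M) {x : ℝ} :
    x ∈ hM.logCone ↔ Real.exp x ∈ M :=
  .rfl

theorem log_mem_logCone (hM : IsIsolatedSubsemigroup M) {x : ℝ} (hx : x ≠ 0) :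
    Real.log x ∈ hM.logCone ↔ x ∈ M := by
  rw [mem_logCone, Real.exp_log_eq_abs hx]
  rcases abs_choice x with h | h <;> rw [h]
  exact ⟨fun h ↦ neg_neg x ▸ hM.neg_mem h, hM.neg_mem⟩

end IsIsolatedSubsemigroup

theorem log_neg_iff_mem_Ioo_union_Ioo {x : ℝ} :
    Real.log x < 0 ↔ x ∈ Ioo (-1 : ℝ) 0 ∪ Ioo (0 : ℝ) 1 := by
  rcases eq_or_ne x 0 with rfl | hx
  · simp
  · rw [← Real.log_abs, Real.log_neg_iff (abs_pos.2 hx), abs_lt]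
    grind

theorem log_pos_iff_mem_Iio_union_Ioi {x : ℝ} :
    0 < Real.log x ↔ x ∈ Iio (-1 : ℝ) ∪ Ioi (1 : ℝ) := by
  rw [← Real.log_abs, Real.log_pos_iff (abs_nonneg x), lt_abs, lt_neg, or_comm]; rfl

theorem quasiMeasurePreserving_exp : Measure.QuasiMeasurePreserving Real.exp := by
  refine ⟨Real.measurable_exp, .mk fun s hs hs₀ ↦ ?_⟩
  rw [Measure.map_apply Real.measurable_exp hs]
  have hlog : DifferentiableOn ℝ Real.log (s ∩ Ioi 0) := fun x hx ↦
    (Real.differentiableAt_log hx.2.ne').differentiableWithinAt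
  have hsub : Real.exp ⁻¹' s ⊆ Real.log '' (s ∩ Ioi 0) := fun x hx ↦
    ⟨Real.exp x, ⟨hx, Real.exp_pos x⟩, Real.log_exp x⟩
  exact measure_mono_null hsub <|
    addHaar_image_eq_zero_of_differentiableOn_of_addHaar_eq_zero volume hlog
      (measure_mono_null inter_subset_left hs₀)

section SymmetricSet

variable {s : Set ℝ}

theorem subset_exp_image_exp_preimage (hs : ∀ x ∈ s, -x ∈ s) :
    s ⊆ Real.exp '' (Real.exp ⁻¹' s) ∪ -(Real.exp '' (Real.exp ⁻¹' s)) ∪ {0} := by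
  rw [image_preimage_eq_inter_range, Real.range_exp]
  intro x hx
  rcases lt_trichotomy x 0 with h | h | h
  · exact .inl (.inr ⟨hs x hx, neg_pos.2 h⟩)
  · exact .inr h
  · exact .inl (.inl ⟨hx, h⟩)

theorem volume_eq_zero_of_exp_preimage (hs : ∀ x ∈ s, -x ∈ s)
    (h : volume (Real.exp ⁻¹' s) = 0) : volume s = 0 := by
  have himage : volume (Real.exp '' (Real.exp ⁻¹' s)) = 0 :=
    addHaar_image_eq_zero_of_differentiableOn_of_addHaar_eq_zero volume
      Real.differentiable_exp.differentiableOn h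
  refine measure_mono_null (subset_exp_image_exp_preimage hs) ?_
  simp only [measure_union_null_iff, Measure.measure_neg, himage, measure_singleton, and_self]

theorem isMeagre_of_exp_preimage (hs : ∀ x ∈ s, -x ∈ s) (h : IsMeagre (Real.exp ⁻¹' s)) :
    IsMeagre s := by
  have himage : IsMeagre (Real.exp '' (Real.exp ⁻¹' s)) :=
    Real.isOpenEmbedding_exp.isInducing.isMeagre_image h
  have hneg : IsMeagre (-(Real.exp '' (Real.exp ⁻¹' s))) :=
    himage.preimage_of_isOpenMap continuous_neg (Homeomorph.neg ℝ).isOpenMap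
  have hzero : IsMeagre ({0} : Set ℝ) := IsNowhereDense.isMeagre (by simp [IsNowhereDense])
  exact ((himage.union hneg).union hzero).mono (subset_exp_image_exp_preimage hs)

end SymmetricSet

namespace IsIsolatedSubsemigroup

variable {M : Set ℝ}

theorem exists_eq_sUnion_of_nonempty_interior (hM : IsIsolatedSubsemigroup M)
    (hint : (interior (hM.logCone : Set ℝ)).Nonempty) :
    ∃ S : Set (Set ℝ),
      S ⊆ {Ioo (-1 : ℝ) 0 ∪ Ioo (0 : ℝ) 1, Iio (-1 : ℝ) ∪ Ioi (1 : ℝ), {(-1 : ℝ), 1}, {(0 : ℝ)}} ∧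
        M = ⋃₀ S := by
  refine ⟨_, sep_subset _ (· ⊆ M), subset_antisymm ?_ (sUnion_subset fun T hT ↦ hT.2)⟩
  have mem_of_log_mem {x : ℝ} (h : Real.log x ≠ 0) (hx : Real.log x ∈ hM.logCone) : x ∈ M :=
    (hM.log_mem_logCone (by rintro rfl; simp at h)).1 hx
  intro x hx
  rcases eq_or_ne x 0 with rfl | hx₀
  · exact ⟨{0}, ⟨by simp, singleton_subset_iff.2 hx⟩, rfl⟩
  have hxC := (hM.log_mem_logCone hx₀).2 hx
  rcases lt_trichotomy (Real.log x) 0 with hlog | hlog | hlog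
  · refine ⟨_, ⟨.inl rfl, fun y hy ↦ ?_⟩, log_neg_iff_mem_Ioo_union_Ioo.1 hlog⟩
    have hy := log_neg_iff_mem_Ioo_union_Ioo.2 hy
    exact mem_of_log_mem hy.ne (Iio_zero_subset_convexCone hint hlog hxC hy)
  · obtain rfl | rfl := (Real.log_eq_zero.1 hlog).resolve_left hx₀
    · exact ⟨{-1, 1}, ⟨by simp, pair_subset (hM.neg_mem hx) hx⟩, by simp⟩
    · exact ⟨{-1, 1}, ⟨by simp, pair_subset hx (by simpa using hM.neg_mem hx)⟩, by simp⟩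
  · refine ⟨_, ⟨.inr (.inl rfl), fun y hy ↦ ?_⟩, log_pos_iff_mem_Iio_union_Ioi.1 hlog⟩
    have hy := log_pos_iff_mem_Iio_union_Ioi.2 hy
    exact mem_of_log_mem hy.ne' (Ioi_zero_subset_convexCone hint hlog hxC hy)

theorem nonempty_interior_logCone_of_add (hM : IsIsolatedSubsemigroup M)
    (h : (interior (hM.logCone + hM.logCone : Set ℝ)).Nonempty) :
    (interior (hM.logCone : Set ℝ)).Nonempty :=
  h.mono (interior_mono (add_subset_iff.2 fun _ hx _ hy ↦ hM.logCone.add_mem hx hy))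

end IsIsolatedSubsemigroup

theorem stmt_7_general {M : Set ℝ} (hM : IsIsolatedSubsemigroup M) :
    ((NullMeasurableSet M → volume M = 0) ∧ (BaireMeasurableSet M → IsMeagre M)) ∨
      ∃ S : Set (Set ℝ),
        S ⊆ {Ioo (-1 : ℝ) 0 ∪ Ioo (0 : ℝ) 1, Iio (-1 : ℝ) ∪ Ioi (1 : ℝ),
             {(-1 : ℝ), 1}, {(0 : ℝ)}} ∧
        M = ⋃₀ S := by
  by_cases hint : (interior (hM.logCone : Set ℝ)).Nonempty
  · exact .inr (hM.exists_eq_sUnion_of_nonempty_interior hint)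
  have hadd := mt hM.nonempty_interior_logCone_of_add hint
  refine .inl ⟨fun hmeas ↦ volume_eq_zero_of_exp_preimage (fun _ ↦ hM.neg_mem) ?_,
    fun hbaire ↦ isMeagre_of_exp_preimage (fun _ ↦ hM.neg_mem) ?_⟩
  · have hC := hmeas.preimage quasiMeasurePreserving_exp
    by_contra hpos
    exact hadd (nonempty_interior_add_of_measure_ne_zero hC hC hpos hpos)
  · have hC := hbaire.preimage Real.continuous_exp Real.isOpenEmbedding_exp.isOpenMap
    by_contra hnonmeagre
    exact hadd (nonempty_interior_add_of_not_isMeagre hC hC hnonmeagre hnonmeagre)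

/-- If `ℝ` is partitioned into Borel sets `M i`, each closed under multiplication, then every
`M i` either is Lebesgue null and meager, or is the union of some subfamily of the four sets
`(-1,0) ∪ (0,1)`, `(-∞,-1) ∪ (1,∞)`, `{-1, 1}`, `{0}`. -/
theorem stmt_7 {ι : Type*} (M : ι → Set ℝ)
    (hmeas : ∀ i, MeasurableSet (M i))
    (hdisj : Pairwise (Function.onFun Disjoint M))
    (hcover : (⋃ i, M i) = Set.univ)
    (hmul : ∀ i, ∀ x ∈ M i, ∀ y ∈ M i, x * y ∈ M i) :
    ∀ i, (MeasureTheory.volume (M i) = 0 ∧ IsMeagre (M i)) ∨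
      ∃ S : Set (Set ℝ),
        S ⊆ {Set.Ioo (-1 : ℝ) 0 ∪ Set.Ioo (0 : ℝ) 1,
             Set.Iio (-1 : ℝ) ∪ Set.Ioi (1 : ℝ),
             {(-1 : ℝ), 1}, {(0 : ℝ)}} ∧
        M i = ⋃₀ S := fun i ↦
  (stmt_7_general (isIsolatedSubsemigroup_of_partition hdisj hcover hmul i)).imp_left
    fun h ↦ ⟨h.1 (hmeas i).nullMeasurableSet, h.2 (hmeas i).baireMeasurableSet⟩
end

section
/- Suppose there exists a Hamel basis H of ℝ (a basis of ℝ as a vector space over ℚ) which can be written as the union of ℵ₁ pairwise disjoint subsets of ℝ each homeomorphic to the Cantor space. Then there exists a family of ℵ₁ pairwise disjoint nonempty F_σ subsets of ℝ, each closed under addition, whose union is ℝ. -/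
/-- An `F_σ` subset of `ℝ`: a countable union of closed sets. -/
def IsFsigma (A : Set ℝ) : Prop :=
  ∃ F : ℕ → Set ℝ, (∀ n, IsClosed (F n)) ∧ A = ⋃ n, F n

/-!
Let the Hamel basis be the union of the blocks `C i`, with `i` running through a well-ordered set
of order type `ω₁`. Order each block by an injective lower semicontinuous function `f` into `ℝ`, and
order the basis lexicographically: first by the block, then by `f`. Put two nonzero vectors into the
same class when their largest basis vectors lie in the same block and occur with coefficients of the
same sign. Adding two vectors of a class cannot cancel the larger of the two leading terms, so the
class is closed under addition.

A class is the union, over the coefficients `c` of its sign and over `r ∈ ℚ`, of the sets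
`c • (C i ∩ {r < f}) + span ((⋃ j < i, C j) ∪ (C i ∩ {f ≤ r}))`.
Semicontinuity makes `C i ∩ {r < f}` open in `C i` and `C i ∩ {f ≤ r}` closed in it, and only
countably many blocks precede `C i`. Hence all the sets involved are `σ`-compact.
-/

open Filter Function Set Topology TopologicalSpace
open scoped Cardinal Pointwise

section SigmaCompact

variable {X : Type*} [TopologicalSpace X]

theorem isSigmaCompact_union {s t : Set X} (hs : IsSigmaCompact s) (ht : IsSigmaCompact t) :
    IsSigmaCompact (s ∪ t) := by
  rw [union_eq_iUnion]
  exact isSigmaCompact_iUnion _ (Bool.forall_bool.2 ⟨ht, hs⟩)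

theorem isSigmaCompact_add [Add X] [ContinuousAdd X] {s t : Set X}
    (hs : IsSigmaCompact s) (ht : IsSigmaCompact t) : IsSigmaCompact (s + t) := by
  obtain ⟨K, hK, rfl⟩ := hs
  obtain ⟨L, hL, rfl⟩ := ht
  simp_rw [iUnion_add, add_iUnion]
  exact isSigmaCompact_iUnion _ fun m ↦
    isSigmaCompact_iUnion_of_isCompact _ fun n ↦ (hK m).add (hL n)

theorem span_eq_iUnion_sum_smul (R : Type*) {M : Type*} [Semiring R] [AddCommMonoid M]
    [Module R M] (s : Set M) :
    (Submodule.span R s : Set M) = ⋃ (n : ℕ) (c : Fin n → R), ∑ k, c k • s := by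
  ext x
  simp only [SetLike.mem_coe, Submodule.mem_span_set', mem_iUnion, mem_fintype_sum]
  constructor
  · rintro ⟨n, c, v, rfl⟩
    exact ⟨n, c, _, fun k ↦ smul_mem_smul_set (v k).2, rfl⟩
  · rintro ⟨n, c, w, hw, rfl⟩
    choose v hv hvw using hw
    exact ⟨n, c, fun k ↦ ⟨v k, hv k⟩, Finset.sum_congr rfl fun k _ ↦ hvw k⟩

theorem isSigmaCompact_span (R : Type*) [Semiring R] [Countable R] [AddCommMonoid X]
    [ContinuousAdd X] [Module R X] [ContinuousConstSMul R X] {s : Set X}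
    (hs : IsSigmaCompact s) : IsSigmaCompact (Submodule.span R s : Set X) := by
  rw [span_eq_iUnion_sum_smul]
  refine isSigmaCompact_iUnion _ fun n ↦ isSigmaCompact_iUnion _ fun c ↦ ?_
  exact Finset.sum_induction _ IsSigmaCompact (fun _ _ ↦ isSigmaCompact_add)
    isCompact_singleton.isSigmaCompact fun k _ ↦ hs.image (continuous_const_smul (c k))

theorem isSigmaCompact_of_isOpen [SigmaCompactSpace X] [PseudoMetrizableSpace X] {U : Set X}
    (hU : IsOpen U) : IsSigmaCompact U := by
  let := pseudoMetrizableSpacePseudoMetric X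
  obtain ⟨F, hF, -, rfl, -⟩ := hU.exists_iUnion_isClosed
  exact isSigmaCompact_iUnion _ fun n ↦
    isSigmaCompact_univ.of_isClosed_subset (hF n) (subset_univ _)

theorem isFsigma_of_isSigmaCompact {A : Set ℝ} (hA : IsSigmaCompact A) : IsFsigma A := by
  obtain ⟨K, hK, rfl⟩ := hA
  exact ⟨K, fun n ↦ (hK n).isClosed, rfl⟩

end SigmaCompact

section Semicontinuous

variable {X : Type*} [TopologicalSpace X]

theorem lowerSemicontinuous_tsum_of_nonneg {α : Type*} {g : α → X → ℝ}
    (hg : ∀ a, LowerSemicontinuous (g a)) (hnonneg : ∀ a x, 0 ≤ g a x)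
    (hsum : ∀ x, Summable fun a ↦ g a x) : LowerSemicontinuous fun x ↦ ∑' a, g a x := by
  intro x r hr
  obtain ⟨s, hs⟩ := ((hsum x).hasSum.eventually (lt_mem_nhds hr)).exists
  filter_upwards [lowerSemicontinuous_sum (fun a _ ↦ hg a) x r hs] with y hy
  exact hy.trans_le ((hsum y).sum_le_tsum s fun a _ ↦ hnonneg a y)

-- The sequence of memberships in the sets of a countable basis determines a point, and its ternary
-- sum `∑ 3⁻ⁿ 1_{Uₙ}` is lower semicontinuous because the `Uₙ` are open.
theorem exists_injective_lowerSemicontinuous (X : Type*) [TopologicalSpace X] [T0Space X]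
    [SecondCountableTopology X] : ∃ f : X → ℝ, Injective f ∧ LowerSemicontinuous f := by
  classical
  obtain ⟨U, hU⟩ := exists_seq_basis X
  let digits (x : X) (n : ℕ) : Bool := decide (x ∈ U n)
  refine ⟨fun x ↦ Cardinal.cantorFunction (1 / 3) (digits x), fun x y hxy ↦ ?_, ?_⟩
  · have hdigits : digits x = digits y :=
      Cardinal.cantorFunction_injective (by norm_num) (by norm_num) hxy
    refine hU.eq_iff.2 (forall_mem_range.2 fun n ↦ ?_)
    simpa [digits] using congrFun hdigits n
  · refine lowerSemicontinuous_tsum_of_nonneg (fun n ↦ ?_)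
      (fun n x ↦ Cardinal.cantorFunctionAux_nonneg (by norm_num))
      fun x ↦ Cardinal.summable_cantor_function _ (by norm_num) (by norm_num)
    have haux : (fun x ↦ Cardinal.cantorFunctionAux (1 / 3) (digits x) n) =
        (U n).indicator fun _ ↦ (1 / 3 : ℝ) ^ n := by
      ext x
      by_cases hx : x ∈ U n <;> simp [Cardinal.cantorFunctionAux, digits, hx]
    rw [haux]
    exact (hU.isOpen (mem_range_self n)).lowerSemicontinuous_indicator (by positivity)

theorem exists_injective_isSigmaCompact_preimage (X : Type*) [TopologicalSpace X]
    [MetrizableSpace X] [SigmaCompactSpace X] :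
    ∃ f : X → ℝ, Injective f ∧ ∀ r, IsSigmaCompact (f ⁻¹' Iic r) ∧
      IsSigmaCompact (f ⁻¹' Ioi r) := by
  let := metrizableSpaceMetric X
  have : SecondCountableTopology X := EMetric.secondCountable_of_sigmaCompact X
  obtain ⟨f, hinj, hf⟩ := exists_injective_lowerSemicontinuous X
  exact ⟨f, hinj, fun r ↦
    ⟨isSigmaCompact_univ.of_isClosed_subset (hf.isClosed_preimage r) (subset_univ _),
      isSigmaCompact_of_isOpen (hf.isOpen_preimage r)⟩⟩

end Semicontinuous

section Order

theorem exists_linearOrder_countable_Iio {ι : Type*} (hι : #ι ≤ ℵ₁) :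
    ∃ _ : LinearOrder ι, ∀ i : ι, (Iio i).Countable := by
  obtain ⟨hlin, _, hord⟩ := Cardinal.exists_ord_eq_type_lt ι
  refine ⟨hlin, fun i ↦ ?_⟩
  have hlt : #(Iio i) < ℵ₁ := (Cardinal.mk_Iio_lt i hord).trans_le hι
  rwa [← countable_coe_iff, ← Cardinal.mk_le_aleph0_iff, ← Order.lt_succ_iff, Cardinal.succ_aleph0]

theorem exists_rat_lt_forall_le_toLex {ι : Type*} [Preorder ι] {i : ι} {a : ℝ}
    {t : Finset (ι ×ₗ ℝ)} (ht : ∀ p ∈ t, p < toLex (i, a)) :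
    ∃ r : ℚ, (r : ℝ) < a ∧ ∀ p ∈ t, p ≤ toLex (i, (r : ℝ)) := by
  have hbelow : ∀ᶠ r in 𝓝[<] a, ∀ p ∈ t, p ≤ toLex (i, r) := by
    rw [eventually_all_finset]
    intro p hp
    rcases Prod.Lex.lt_iff.1 (ht p hp) with hlt | ⟨heq, hlt⟩
    · exact .of_forall fun r ↦ Prod.Lex.le_iff.2 (.inl hlt)
    · filter_upwards [Ico_mem_nhdsLT hlt] with r hr
      exact Prod.Lex.le_iff.2 (.inr ⟨heq, hr.1⟩)
  obtain ⟨s, hs, hsa⟩ := (hbelow.and self_mem_nhdsWithin).exists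
  obtain ⟨r, hsr, hra⟩ := exists_rat_btwn hsa
  exact ⟨r, hra, fun p hp ↦ (hs p hp).trans (Prod.Lex.le_iff.2 (.inr ⟨rfl, hsr.le⟩))⟩

theorem setOf_toLex_le_eq_union {κ ι : Type*} [LinearOrder ι] (idx : κ → ι) (f : κ → ℝ) (i : ι)
    (r : ℝ) : {g | toLex (idx g, f g) ≤ toLex (i, r)} =
      (⋃ j ∈ Iio i, {g | idx g = j}) ∪ {g | idx g = i ∧ f g ≤ r} := by
  ext g
  simp [Prod.Lex.le_iff]

theorem injective_toLex_sigma {ι β : Type*} {α : ι → Type*} {f : ∀ i, α i → β}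
    (hf : ∀ i, Injective (f i)) :
    Injective fun g : Σ i, α i ↦ toLex (g.1, f g.1 g.2) := by
  rintro ⟨i, x⟩ ⟨j, y⟩ hxy
  obtain ⟨hij, hfxy⟩ := Prod.mk.inj hxy
  obtain rfl : i = j := hij
  exact congrArg _ (hf i hfxy)

theorem mk_withBot_prod_bool (ι : Type*) [Infinite ι] : #(WithBot (ι × Bool)) = #ι := by
  have hι : ℵ₀ ≤ #ι := Cardinal.aleph0_le_mk ι
  change #(Option (ι × Bool)) = #ι
  rw [Cardinal.mk_option, Cardinal.mk_prod, Cardinal.lift_uzero, Cardinal.mk_bool,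
    Cardinal.lift_ofNat, Cardinal.mul_eq_left hι (Cardinal.ofNat_lt_aleph0.le.trans hι) two_ne_zero,
    Cardinal.add_one_eq hι]

end Order

section LeadingIndex

variable {K E κ : Type*} [LinearOrder κ]

section Semiring

variable [Semiring K] [AddCommMonoid E] [Module K E] (b : Module.Basis κ K E)

/-- The largest index at which `x` has a nonzero coordinate, the analogue of the degree of a
polynomial; it is `⊥` for `x = 0`. -/
noncomputable def leadingIndex (x : E) : WithBot κ := (b.repr x).support.max

variable {b} {x y : E} {h : κ}

theorem leadingIndex_eq_bot_iff : leadingIndex b x = ⊥ ↔ x = 0 := by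
  simp [leadingIndex, Finset.max_eq_bot]

theorem leadingIndex_eq_coe_iff :
    leadingIndex b x = h ↔ b.repr x h ≠ 0 ∧ ∀ g, h < g → b.repr x g = 0 := by
  refine ⟨fun hx ↦ ⟨Finsupp.mem_support_iff.1 (Finset.mem_of_max hx), fun g hg ↦ ?_⟩,
    fun ⟨hh, hlt⟩ ↦ ?_⟩
  · exact Finsupp.notMem_support_iff.1 fun hmem ↦ (Finset.le_max_of_eq hmem hx).not_gt hg
  · refine le_antisymm (Finset.max_le fun g hg ↦ ?_)
      (Finset.le_max (Finsupp.mem_support_iff.2 hh))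
    exact WithBot.coe_le_coe.2 (not_lt.1 fun hhg ↦ Finsupp.mem_support_iff.1 hg (hlt g hhg))

theorem mem_span_image_Iio_iff :
    x ∈ Submodule.span K (b '' Iio h) ↔ ∀ g, h ≤ g → b.repr x g = 0 := by
  simp only [b.mem_span_image, Finsupp.support_subset_iff, mem_Iio, not_lt]

theorem repr_smul_add_of_mem_span_Iio {c : K} (hx : x ∈ Submodule.span K (b '' Iio h)) :
    b.repr (c • b h + x) h = c := by
  simp [mem_span_image_Iio_iff.1 hx h le_rfl]

theorem leadingIndex_smul_add_of_mem_span_Iio {c : K} (hc : c ≠ 0)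
    (hx : x ∈ Submodule.span K (b '' Iio h)) : leadingIndex b (c • b h + x) = h := by
  refine leadingIndex_eq_coe_iff.2 ⟨by rwa [repr_smul_add_of_mem_span_Iio hx], fun g hg ↦ ?_⟩
  simp [hg.ne, mem_span_image_Iio_iff.1 hx g hg.le]

theorem repr_eq_zero_of_leadingIndex_lt (hx : leadingIndex b x < h) : b.repr x h = 0 :=
  Finsupp.notMem_support_iff.1 fun hmem ↦ (Finset.le_max hmem).not_gt hx

theorem leadingIndex_add_eq_right_of_lt (hlt : leadingIndex b x < leadingIndex b y) :
    leadingIndex b (x + y) = leadingIndex b y := by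
  obtain ⟨h, hy⟩ := WithBot.ne_bot_iff_exists.1 hlt.ne_bot
  rw [← hy] at hlt ⊢
  obtain ⟨hh, hzero⟩ := leadingIndex_eq_coe_iff.1 hy.symm
  refine leadingIndex_eq_coe_iff.2 ⟨?_, fun g hg ↦ ?_⟩
  · simpa [repr_eq_zero_of_leadingIndex_lt hlt] using hh
  · simp [hzero g hg, repr_eq_zero_of_leadingIndex_lt (hlt.trans (WithBot.coe_lt_coe.2 hg))]

theorem leadingIndex_add_eq_of_eq (hx : leadingIndex b x = h) (hy : leadingIndex b y = h)
    (hxy : b.repr x h + b.repr y h ≠ 0) : leadingIndex b (x + y) = h := by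
  rw [leadingIndex_eq_coe_iff] at hx hy ⊢
  exact ⟨by simpa using hxy, fun g hg ↦ by simp [hx.2 g hg, hy.2 g hg]⟩

end Semiring

theorem sub_leadingTerm_mem_span_Iio [Ring K] [AddCommGroup E] [Module K E]
    {b : Module.Basis κ K E} {x : E} {h : κ} (hx : leadingIndex b x = h) :
    x - b.repr x h • b h ∈ Submodule.span K (b '' Iio h) := by
  refine mem_span_image_Iio_iff.2 fun g hg ↦ ?_
  rcases hg.eq_or_lt with rfl | hlt
  · simp
  · simp [hlt.ne, (leadingIndex_eq_coe_iff.1 hx).2 g hlt]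

end LeadingIndex

section LeadingClass

variable {K E κ ι : Type*} [LinearOrder κ] [Ring K] [LinearOrder K] [AddCommGroup E] [Module K E]

/-- The block, given by `idx`, of the leading index of `x`, together with the sign of the leading
coefficient (`true` meaning positive). The fibers of this map are the pieces of the partition; the
fiber over `⊥` is `{0}`. -/
noncomputable def leadingClass (b : Module.Basis κ K E) (idx : κ → ι) (x : E) :
    WithBot (ι × Bool) :=
  (leadingIndex b x).map fun h ↦ (idx h, decide (0 < b.repr x h))

variable {b : Module.Basis κ K E} {idx : κ → ι} {x y : E}

theorem leadingClass_eq_coe_iff {i : ι} {s : Bool} :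
    leadingClass b idx x = ((i, s) : ι × Bool) ↔
      ∃ h : κ, leadingIndex b x = h ∧ idx h = i ∧ decide (0 < b.repr x h) = s := by
  simp only [leadingClass, WithBot.map_eq_some_iff, Prod.mk.injEq]

theorem leadingClass_eq_bot_iff : leadingClass b idx x = ⊥ ↔ x = 0 := by
  rw [leadingClass, WithBot.map_eq_bot_iff, leadingIndex_eq_bot_iff]

theorem leadingClass_add_eq_right_of_lt (hlt : leadingIndex b x < leadingIndex b y) :
    leadingClass b idx (x + y) = leadingClass b idx y := by
  obtain ⟨h, hy⟩ := WithBot.ne_bot_iff_exists.1 hlt.ne_bot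
  have hx : b.repr x h = 0 := repr_eq_zero_of_leadingIndex_lt (hy ▸ hlt)
  simp [leadingClass, leadingIndex_add_eq_right_of_lt hlt, ← hy, hx]

variable [IsStrictOrderedRing K]

theorem leadingClass_surjective (hidx : Surjective idx) : Surjective (leadingClass b idx) := by
  rintro (_ | ⟨i, s⟩)
  · exact ⟨0, leadingClass_eq_bot_iff.2 rfl⟩
  · obtain ⟨h, rfl⟩ := hidx i
    obtain ⟨c, hc, hs⟩ : ∃ c : K, c ≠ 0 ∧ decide (0 < c) = s := by
      cases s
      · exact ⟨-1, by simp⟩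
      · exact ⟨1, by simp⟩
    have hlead : leadingIndex b (c • b h) = h := by
      simpa using leadingIndex_smul_add_of_mem_span_Iio hc (zero_mem _)
    exact ⟨c • b h, leadingClass_eq_coe_iff.2 ⟨h, hlead, rfl, by simpa using hs⟩⟩

theorem add_ne_zero_and_decide_pos_eq {p q : K} {s : Bool} (hp₀ : p ≠ 0) (hq₀ : q ≠ 0)
    (hp : decide (0 < p) = s) (hq : decide (0 < q) = s) :
    p + q ≠ 0 ∧ decide (0 < p + q) = s := by
  cases s
  · have hneg : p + q < 0 := add_neg (lt_of_le_of_ne (by simpa using hp) hp₀)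
      (lt_of_le_of_ne (by simpa using hq) hq₀)
    exact ⟨hneg.ne, by simpa using hneg.le⟩
  · have hpos : 0 < p + q := add_pos (by simpa using hp) (by simpa using hq)
    exact ⟨hpos.ne', by simpa using hpos⟩

theorem leadingClass_add_eq {c : WithBot (ι × Bool)} (hx : leadingClass b idx x = c)
    (hy : leadingClass b idx y = c) : leadingClass b idx (x + y) = c := by
  rcases lt_trichotomy (leadingIndex b x) (leadingIndex b y) with hlt | heq | hgt
  · rw [leadingClass_add_eq_right_of_lt hlt, hy]
  · rcases c with _ | ⟨i, s⟩
    · rw [leadingClass_eq_bot_iff.1 hx, zero_add]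
      exact hy
    · obtain ⟨h, hxh, rfl, hxs⟩ := leadingClass_eq_coe_iff.1 hx
      obtain ⟨h', hyh, -, hys⟩ := leadingClass_eq_coe_iff.1 hy
      obtain rfl : h = h' := WithBot.coe_injective (hxh.symm.trans (heq.trans hyh))
      obtain ⟨hne, hs⟩ := add_ne_zero_and_decide_pos_eq (leadingIndex_eq_coe_iff.1 hxh).1
        (leadingIndex_eq_coe_iff.1 hyh).1 hxs hys
      exact leadingClass_eq_coe_iff.2
        ⟨h, leadingIndex_add_eq_of_eq hxh hyh hne, rfl, by simpa using hs⟩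
  · rw [add_comm, leadingClass_add_eq_right_of_lt hgt, hx]

end LeadingClass

section SigmaCompactFibers

variable {K E κ ι : Type*} [LinearOrder κ] [LinearOrder ι] [Ring K] [LinearOrder K]
  [AddCommGroup E] [Module K E] {b : Module.Basis κ K E} {idx : κ → ι} {f : κ → ℝ}

-- The finitely many other indices in the support of `x` lie below a common rational cut of the
-- block of the leading one.
theorem leadingClass_preimage_coe_eq_iUnion (hmono : StrictMono fun g ↦ toLex (idx g, f g))
    (i : ι) (s : Bool) :
    leadingClass b idx ⁻¹' {(((i, s) : ι × Bool) : WithBot (ι × Bool))} =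
      ⋃ (c : {c : K // c ≠ 0 ∧ decide (0 < c) = s}) (r : ℚ),
        (c : K) • (b '' {g | idx g = i ∧ (r : ℝ) < f g}) +
          (Submodule.span K (b '' {g | toLex (idx g, f g) ≤ toLex (i, (r : ℝ))}) : Set E) := by
  ext x
  rw [mem_preimage, mem_singleton_iff, leadingClass_eq_coe_iff]
  simp only [mem_iUnion, Set.mem_add]
  constructor
  · rintro ⟨h, hx, rfl, hs⟩
    have hsupp := b.mem_span_image.1 (sub_leadingTerm_mem_span_Iio hx)
    obtain ⟨r, hr, hcut⟩ := exists_rat_lt_forall_le_toLex (i := idx h) (a := f h)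
      (t := (b.repr (x - b.repr x h • b h)).support.image fun g ↦ toLex (idx g, f g))
      (Finset.forall_mem_image.2 fun g hg ↦ hmono (hsupp hg))
    refine ⟨⟨b.repr x h, (leadingIndex_eq_coe_iff.1 hx).1, hs⟩, r, b.repr x h • b h,
      smul_mem_smul_set ⟨h, ⟨rfl, hr⟩, rfl⟩, x - b.repr x h • b h, ?_, add_sub_cancel _ _⟩
    exact b.mem_span_image.2 fun g hg ↦ hcut _ (Finset.mem_image_of_mem _ hg)
  · rintro ⟨⟨c, hc, hs⟩, r, _, ⟨_, ⟨h, ⟨rfl, hr⟩, rfl⟩, rfl⟩, v, hv, rfl⟩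
    have hcut : {g | toLex (idx g, f g) ≤ toLex (idx h, (r : ℝ))} ⊆ Iio h := fun g hg ↦
      hmono.lt_iff_lt.1 (lt_of_le_of_lt hg (Prod.Lex.toLex_lt_toLex.2 (.inr ⟨rfl, hr⟩)))
    have hv' : v ∈ Submodule.span K (b '' Iio h) := Submodule.span_mono (image_mono hcut) hv
    refine ⟨h, leadingIndex_smul_add_of_mem_span_Iio hc hv', rfl, ?_⟩
    rwa [repr_smul_add_of_mem_span_Iio hv']

variable [Countable K] [TopologicalSpace E] [ContinuousAdd E] [ContinuousConstSMul K E]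

theorem isSigmaCompact_leadingClass_preimage (hmono : StrictMono fun g ↦ toLex (idx g, f g))
    (hcount : ∀ i : ι, (Iio i).Countable)
    (hle : ∀ i r, IsSigmaCompact (b '' {g | idx g = i ∧ f g ≤ r}))
    (hgt : ∀ i r, IsSigmaCompact (b '' {g | idx g = i ∧ r < f g})) (c : WithBot (ι × Bool)) :
    IsSigmaCompact (leadingClass b idx ⁻¹' {c}) := by
  have hblock (i : ι) : IsSigmaCompact (b '' {g | idx g = i}) := by
    convert isSigmaCompact_union (hle i 0) (hgt i 0)
    rw [← image_union]
    congr 1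
    ext g
    simp [← and_or_left, le_or_gt]
  have hinit (i : ι) (r : ℝ) : IsSigmaCompact (b '' {g | toLex (idx g, f g) ≤ toLex (i, r)}) := by
    rw [setOf_toLex_le_eq_union, image_union, image_iUnion₂]
    exact isSigmaCompact_union (isSigmaCompact_biUnion (hcount i) fun j _ ↦ hblock j) (hle i r)
  rcases c with _ | ⟨i, s⟩
  · convert isCompact_singleton (x := (0 : E)) |>.isSigmaCompact
    ext x
    exact leadingClass_eq_bot_iff
  · change IsSigmaCompact (leadingClass b idx ⁻¹' {(((i, s) : ι × Bool) : WithBot (ι × Bool))})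
    rw [leadingClass_preimage_coe_eq_iUnion hmono]
    exact isSigmaCompact_iUnion _ fun c ↦ isSigmaCompact_iUnion _ fun r ↦ isSigmaCompact_add
      ((hgt i r).image (continuous_const_smul (c : K))) (isSigmaCompact_span K (hinit i r))

end SigmaCompactFibers

section BasisPartition

variable {K E ι : Type*} [Ring K] [AddCommGroup E] [Module K E] {C : ι → Set E}

theorem exists_basis_sigma_of_iUnion_eq {H : Set E} (hli : LinearIndependent K ((↑) : H → E))
    (hspan : Submodule.span K H = ⊤) (hdisj : Pairwise (Disjoint on C)) (hunion : ⋃ i, C i = H) :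
    ∃ b : Module.Basis (Σ i, C i) K E, ∀ g, b g = g.2 := by
  subst hunion
  exact ⟨(Module.Basis.mk hli (by rw [Subtype.range_coe, hspan])).reindex
    (unionEqSigmaOfDisjoint hdisj), fun g ↦ by simp⟩

theorem image_basis_sigma {b : Module.Basis (Σ i, C i) K E} (hb : ∀ g, b g = g.2)
    (f : ∀ i, C i → ℝ) (i : ι) (S : Set ℝ) :
    b '' {g | g.1 = i ∧ f g.1 g.2 ∈ S} = (↑) '' (f i ⁻¹' S) := by
  ext x
  constructor
  · rintro ⟨⟨_, y⟩, ⟨rfl, hy⟩, rfl⟩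
    exact ⟨y, hy, (hb ⟨_, y⟩).symm⟩
  · rintro ⟨y, hy, rfl⟩
    exact ⟨⟨i, y⟩, ⟨rfl, hy⟩, hb _⟩

end BasisPartition

theorem stmt_11_general {K E ι : Type*} [Ring K] [LinearOrder K] [IsStrictOrderedRing K]
    [Countable K] [AddCommGroup E] [Module K E] [TopologicalSpace E] [MetrizableSpace E]
    [ContinuousAdd E] [ContinuousConstSMul K E] (H : Set E)
    (hli : LinearIndependent K ((↑) : H → E)) (hspan : Submodule.span K H = ⊤)
    [Infinite ι] (hι : #ι ≤ ℵ₁) (C : ι → Set E) (hdisj : Pairwise (Disjoint on C))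
    (hne : ∀ i, (C i).Nonempty) (hC : ∀ i, IsSigmaCompact (C i)) (hunion : ⋃ i, C i = H) :
    ∃ (ι' : Type _) (A : ι' → Set E),
      #ι' = #ι ∧ Pairwise (Disjoint on A) ∧ (∀ i, (A i).Nonempty) ∧
      (∀ i, IsSigmaCompact (A i)) ∧ (∀ i, ∀ x ∈ A i, ∀ y ∈ A i, x + y ∈ A i) ∧
      ⋃ i, A i = univ := by
  obtain ⟨_, hcount⟩ := exists_linearOrder_countable_Iio hι
  obtain ⟨b, hb⟩ := exists_basis_sigma_of_iUnion_eq hli hspan hdisj hunion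
  have (i : ι) : SigmaCompactSpace (C i) := isSigmaCompact_iff_sigmaCompactSpace.1 (hC i)
  choose f hinj hf using fun i ↦ exists_injective_isSigmaCompact_preimage (C i)
  let := LinearOrder.lift' _ (injective_toLex_sigma hinj)
  have himage (i : ι) (S : Set ℝ) (hS : IsSigmaCompact (f i ⁻¹' S)) :
      IsSigmaCompact (b '' {g | g.1 = i ∧ f g.1 g.2 ∈ S}) :=
    image_basis_sigma hb f i S ▸ hS.image continuous_subtype_val
  have hsurj : Surjective (leadingClass b Sigma.fst) :=
    leadingClass_surjective fun i ↦ ⟨⟨i, _, (hne i).some_mem⟩, rfl⟩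
  refine ⟨WithBot (ι × Bool), fun c ↦ leadingClass b Sigma.fst ⁻¹' {c}, mk_withBot_prod_bool ι,
    pairwise_disjoint_fiber _, fun c ↦ hsurj c, fun c ↦ ?_,
    fun c x hx y hy ↦ leadingClass_add_eq hx hy, ?_⟩
  · exact isSigmaCompact_leadingClass_preimage (f := fun g ↦ f g.1 g.2) (fun _ _ h ↦ h) hcount
      (fun i r ↦ himage i _ (hf i r).1) (fun i r ↦ himage i _ (hf i r).2) c
  · rw [← preimage_iUnion, iUnion_of_singleton, preimage_univ]

/-- If there is a Hamel basis of `ℝ` over `ℚ` which is the union of `ℵ₁` pairwise disjoint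
sets each homeomorphic to the Cantor space `{0,1}^ℕ`, then `ℝ` can be partitioned into `ℵ₁`
nonempty `F_σ` sets closed under addition. -/
theorem stmt_11 (H : Set ℝ)
    (hli : LinearIndependent ℚ ((↑) : H → ℝ))
    (hspan : Submodule.span ℚ H = ⊤)
    (ι : Type) (hι : Cardinal.mk ι = Cardinal.aleph 1)
    (C : ι → Set ℝ)
    (hdisj : Pairwise (Function.onFun Disjoint C))
    (hcantor : ∀ i, Nonempty (C i ≃ₜ (ℕ → Bool)))
    (hunion : (⋃ i, C i) = H) :
    ∃ (ι' : Type) (A : ι' → Set ℝ),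
      Cardinal.mk ι' = Cardinal.aleph 1 ∧
      Pairwise (Function.onFun Disjoint A) ∧
      (∀ i, (A i).Nonempty) ∧
      (∀ i, IsFsigma (A i)) ∧
      (∀ i, ∀ x ∈ A i, ∀ y ∈ A i, x + y ∈ A i) ∧
      (⋃ i, A i) = Set.univ := by
  have : Infinite ι := Cardinal.infinite_iff.2 (hι ▸ Cardinal.aleph0_le_aleph 1)
  have hcompact (i : ι) : IsCompact (C i) :=
    (hcantor i).elim fun e ↦ isCompact_iff_compactSpace.2 e.symm.compactSpace
  obtain ⟨ι', A, hcard, hA, hne, hsc, hadd, hcover⟩ := stmt_11_general H hli hspan hι.le C hdisj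
    (fun i ↦ (hcantor i).elim fun e ↦ ⟨_, (e.symm default).2⟩)
    (fun i ↦ (hcompact i).isSigmaCompact) hunion
  exact ⟨ι', A, hcard.trans hι, hA, hne, fun i ↦ isFsigma_of_isSigmaCompact (hsc i), hadd, hcover⟩
end

section
/- Suppose (A_i)_{i ∈ I} is a family of pairwise disjoint nonempty subsets of ℝ whose union is ℝ, and each A_i is closed under addition. If x, y are nonzero reals such that x/y is a positive rational number, then x and y belong to the same piece A_i. Consequently each A_i is a union of sets of the form c·ℚ⁺ = {c·q : q ∈ ℚ, q > 0} with c ∈ ℝ. -/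
/-!
A set closed under addition contains all positive integer multiples of its elements. If
`m • x = n • y` with `m, n > 0`, this common multiple therefore lies both in the piece of `x` and
in the piece of `y`, so the two pieces coincide. In a rational vector space such a relation says
exactly that `x` is a positive rational multiple of `y`.
-/

/-- Two elements of an additive monoid are positively commensurable if they have a common positive
integer multiple. This is the substitute for "positive rational ratio" where division by integers
is not available. -/
def PosCommensurable {M : Type*} [AddMonoid M] (x y : M) : Prop :=
  ∃ m n : ℕ, 0 < m ∧ 0 < n ∧ m • x = n • y

section AddMonoid

variable {M : Type*} [AddMonoid M]

theorem PosCommensurable.refl (x : M) : PosCommensurable x x :=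
  ⟨1, 1, one_pos, one_pos, rfl⟩

theorem nsmul_mem_of_pos {σ : Type*} [SetLike σ M] [AddMemClass σ M] {S : σ} {x : M}
    (hx : x ∈ S) {n : ℕ} (hn : 0 < n) : n • x ∈ S := by
  induction n, hn using Nat.le_induction with
  | base => rwa [one_nsmul]
  | succ k _ ih => rw [succ_nsmul]; exact add_mem ih hx

theorem PosCommensurable.not_disjoint {S T : AddSubsemigroup M} {x y : M}
    (hxy : PosCommensurable x y) (hx : x ∈ S) (hy : y ∈ T) : ¬Disjoint (S : Set M) T := by
  obtain ⟨m, n, hm, hn, h⟩ := hxy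
  exact Set.not_disjoint_iff.mpr
    ⟨m • x, nsmul_mem_of_pos hx hm, h ▸ nsmul_mem_of_pos hy hn⟩

end AddMonoid

theorem posCommensurable_iff_exists_rat_smul {V : Type*} [AddCommMonoid V] [Module ℚ V] {x y : V} :
    PosCommensurable x y ↔ ∃ q : ℚ, 0 < q ∧ x = q • y := by
  constructor
  · rintro ⟨m, n, hm, hn, h⟩
    have hm_ne : (m : ℚ) ≠ 0 := by positivity
    refine ⟨n / m, by positivity, ?_⟩
    rw [div_eq_inv_mul, mul_smul, eq_inv_smul_iff₀ hm_ne, Nat.cast_smul_eq_nsmul,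
      Nat.cast_smul_eq_nsmul, h]
  · rintro ⟨q, hq, rfl⟩
    lift q to ℚ≥0 using hq.le
    refine ⟨q.den, q.num, q.den_pos, NNRat.num_pos.mpr (mod_cast hq), ?_⟩
    have den_mul : (q.den : ℚ) * (q : ℚ) = q.num := mod_cast q.den_mul_eq_num
    rw [← Nat.cast_smul_eq_nsmul ℚ, ← Nat.cast_smul_eq_nsmul ℚ, smul_smul, den_mul]

theorem stmt_12_general {M : Type*} [AddMonoid M] {ι : Type*} (A : ι → AddSubsemigroup M)
    (hdisj : Pairwise (Function.onFun Disjoint fun i ↦ (A i : Set M)))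
    (hcover : (⋃ i, (A i : Set M)) = Set.univ) :
    (∀ x y : M, PosCommensurable x y → ∀ i j, x ∈ A i → y ∈ A j → i = j) ∧
    (∀ i, ∃ C : Set M, (A i : Set M) = ⋃ c ∈ C, {x : M | PosCommensurable x c}) := by
  have index_eq (x y : M) (hxy : PosCommensurable x y) (i j : ι) (hx : x ∈ A i) (hy : y ∈ A j) :
      i = j :=
    hdisj.eq (hxy.not_disjoint hx hy)
  refine ⟨index_eq, fun i ↦ ⟨A i, subset_antisymm ?_ ?_⟩⟩
  · exact fun x hx ↦ Set.mem_biUnion hx (PosCommensurable.refl x)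
  · refine Set.iUnion₂_subset fun c hc x hxc ↦ ?_
    obtain ⟨j, hxj⟩ := Set.iUnion_eq_univ_iff.mp hcover x
    exact index_eq x c hxc j i hxj hc ▸ hxj

/-- If `ℝ` is partitioned into nonempty sets closed under addition, then any two nonzero reals
whose ratio is a positive rational lie in the same piece; consequently each piece is a union
of sets of the form `c · ℚ⁺`. -/
theorem stmt_12 {ι : Type*} (A : ι → Set ℝ)
    (hne : ∀ i, (A i).Nonempty)
    (hdisj : Pairwise (Function.onFun Disjoint A))
    (hcover : (⋃ i, A i) = Set.univ)
    (hadd : ∀ i, ∀ x ∈ A i, ∀ y ∈ A i, x + y ∈ A i) :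
    (∀ x y : ℝ, x ≠ 0 → y ≠ 0 → (∃ q : ℚ, 0 < q ∧ x = (q : ℝ) * y) →
      ∀ i j, x ∈ A i → y ∈ A j → i = j) ∧
    (∀ i, ∃ C : Set ℝ, A i = ⋃ c ∈ C, {x : ℝ | ∃ q : ℚ, 0 < q ∧ x = c * (q : ℝ)}) := by
  have h := stmt_12_general (fun i ↦ ⟨A i, fun hx hy ↦ hadd i _ hx _ hy⟩) hdisj hcover
  simp only [posCommensurable_iff_exists_rat_smul, Rat.smul_def, AddSubsemigroup.coe_set_mk] at h
  exact ⟨fun x y _ _ ↦ h.1 x y, by simpa only [mul_comm] using h.2⟩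
end

section
/- Suppose (A_i)_{i ∈ I} is a family of pairwise disjoint nonempty subsets of ℝ whose union is ℝ, each A_i is closed under addition, and each A_i is a G_δ set. Then each A_i is the union of some subfamily of the three sets (-∞, 0), {0}, (0, ∞); consequently the cardinality of I is at most 3. -/
/-!
Each piece `S` is closed under division by positive integers: if `n • x ∈ S`, then the piece
containing `x` also contains `n • x`, so it is `S`. Hence, for `x ∈ S`, the set of `t` with
`t • x ∈ S` is an additively closed `G_δ` subset of `ℝ` containing the positive rationals.
By Baire's theorem it meets its reflection `y ↦ c - y` inside `(0, c)` for every `c > 0`,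
so it contains `c`. Thus `S` is closed under multiplication by positive reals, and the orbits of
this scaling on `ℝ` are `(-∞, 0)`, `{0}` and `(0, ∞)`.
-/

open Set
open scoped Pointwise

lemma dense_union_compl_closure {X : Type*} [TopologicalSpace X] {s U : Set X}
    (h : U ⊆ closure s) : Dense (s ∪ (closure U)ᶜ) := by
  rw [dense_iff_closure_eq, closure_union, eq_univ_iff_forall]
  intro x
  by_cases hx : x ∈ closure U
  · exact Or.inl (closure_minimal h isClosed_closure hx)
  · exact Or.inr (subset_closure hx)

lemma inter_inter_nonempty_of_isGδ {X : Type*} [TopologicalSpace X] [BaireSpace X]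
    {s t U : Set X} (hs : IsGδ s) (ht : IsGδ t) (hU : IsOpen U) (hne : U.Nonempty)
    (hUs : U ⊆ closure s) (hUt : U ⊆ closure t) : (U ∩ (s ∩ t)).Nonempty := by
  have hc : IsGδ (closure U)ᶜ := isClosed_closure.isOpen_compl.isGδ
  have hdense : Dense ((s ∪ (closure U)ᶜ) ∩ (t ∪ (closure U)ᶜ)) :=
    Dense.inter_of_Gδ (hs.union hc) (ht.union hc)
      (dense_union_compl_closure hUs) (dense_union_compl_closure hUt)
  obtain ⟨x, hxU, hxs, hxt⟩ := hdense.inter_open_nonempty U hU hne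
  have hx : x ∉ (closure U)ᶜ := not_not_intro (subset_closure hxU)
  exact ⟨x, hxU, hxs.resolve_right hx, hxt.resolve_right hx⟩

lemma add_subset_add_of_isGδ_of_subset_closure {G : Type*} [AddGroup G] [TopologicalSpace G]
    [IsTopologicalAddGroup G] [BaireSpace G] {s t U V : Set G} (hs : IsGδ s) (ht : IsGδ t)
    (hU : IsOpen U) (hV : IsOpen V) (hUs : U ⊆ closure s) (hVt : V ⊆ closure t) :
    U + V ⊆ s + t := by
  rintro _ ⟨u, hu, v, hv, rfl⟩
  let e : G ≃ₜ G := (Homeomorph.neg G).trans (Homeomorph.addRight (u + v))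
  have hVt' : e ⁻¹' V ⊆ closure (e ⁻¹' t) := by
    rw [← e.preimage_closure]
    exact preimage_mono hVt
  have huV : e u ∈ V := by simpa [e] using hv
  obtain ⟨y, -, hys, hyt⟩ := inter_inter_nonempty_of_isGδ hs (ht.preimage e.continuous)
    (hU.inter (hV.preimage e.continuous)) ⟨u, hu, huV⟩
    (inter_subset_left.trans hUs) (inter_subset_right.trans hVt')
  exact ⟨y, hys, e y, hyt, by simp [e]⟩

lemma nsmul_mem_of_ne_zero {M : Type*} [AddMonoid M] {S : AddSubsemigroup M} {x : M}
    (hx : x ∈ S) {n : ℕ} (hn : n ≠ 0) : n • x ∈ S := by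
  obtain ⟨k, rfl⟩ := Nat.exists_eq_add_one_of_ne_zero hn
  induction k with
  | zero => simpa using hx
  | succ k ih =>
    rw [succ_nsmul]
    exact S.add_mem (ih k.succ_ne_zero) hx

lemma mem_of_nsmul_mem_of_partition {M ι : Type*} [AddMonoid M] {A : ι → AddSubsemigroup M}
    (hdisj : Pairwise (Function.onFun Disjoint fun i => (A i : Set M)))
    (hcover : ⋃ i, (A i : Set M) = univ) {i : ι} {n : ℕ} (hn : n ≠ 0) {x : M}
    (hx : n • x ∈ A i) : x ∈ A i := by
  obtain ⟨j, hj⟩ := iUnion_eq_univ_iff.1 hcover x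
  have hij : i = j := hdisj.eq (not_disjoint_iff.2 ⟨n • x, hx, nsmul_mem_of_ne_zero hj hn⟩)
  exact hij ▸ hj

lemma nnrat_smul_mem {M : Type*} [AddCommMonoid M] [Module ℚ≥0 M] {S : AddSubsemigroup M}
    (hdiv : ∀ n : ℕ, n ≠ 0 → ∀ x, n • x ∈ S → x ∈ S) {x : M} (hx : x ∈ S) {q : ℚ≥0}
    (hq : q ≠ 0) : q • x ∈ S := by
  have hmul : q.den • (q • x) = q.num • x := by
    rw [← Nat.cast_smul_eq_nsmul ℚ≥0, smul_smul, NNRat.den_mul_eq_num,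
      Nat.cast_smul_eq_nsmul]
  refine hdiv q.den q.den_ne_zero _ ?_
  rw [hmul]
  exact nsmul_mem_of_ne_zero hx (NNRat.num_ne_zero.2 hq)

lemma Ioi_zero_subset_of_isGδ {S : AddSubsemigroup ℝ} (hS : IsGδ (S : Set ℝ))
    (hdiv : ∀ n : ℕ, n ≠ 0 → ∀ x, n • x ∈ S → x ∈ S) (hone : (1 : ℝ) ∈ S) :
    Ioi 0 ⊆ (S : Set ℝ) := by
  have hrat : Ioi 0 ∩ range ((↑) : ℚ → ℝ) ⊆ S := by
    rintro _ ⟨hq, q, rfl⟩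
    have hq' : 0 < q := Rat.cast_pos.1 (mem_Ioi.1 hq)
    lift q to ℚ≥0 using hq'.le
    simpa [NNRat.smul_def] using nnrat_smul_mem hdiv hone (NNRat.coe_pos.1 hq').ne'
  have hclosure : Ioi 0 ⊆ closure (S : Set ℝ) :=
    (Rat.denseRange_cast.open_subset_closure_inter isOpen_Ioi).trans (closure_mono hrat)
  intro c (hc : 0 < c)
  have hsum : c ∈ Ioi (0 : ℝ) + Ioi 0 := ⟨c / 2, half_pos hc, c / 2, half_pos hc, add_halves c⟩
  obtain ⟨a, ha, b, hb, rfl⟩ :=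
    add_subset_add_of_isGδ_of_subset_closure hS hS isOpen_Ioi isOpen_Ioi hclosure hclosure hsum
  exact S.add_mem ha hb

lemma smul_mem_of_isGδ {E : Type*} [AddCommMonoid E] [Module ℝ E] [TopologicalSpace E]
    [ContinuousSMul ℝ E] {S : AddSubsemigroup E} (hS : IsGδ (S : Set E))
    (hdiv : ∀ n : ℕ, n ≠ 0 → ∀ x, n • x ∈ S → x ∈ S) {x : E} (hx : x ∈ S) {c : ℝ}
    (hc : 0 < c) : c • x ∈ S := by
  let T : AddSubsemigroup ℝ := S.comap ((smulAddHom ℝ E).flip x : AddHom ℝ E)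
  have hT : IsGδ (T : Set ℝ) :=
    hS.preimage (f := fun t : ℝ => t • x) (by fun_prop)
  have hdivT (n : ℕ) (hn : n ≠ 0) (t : ℝ) (ht : n • t ∈ T) : t ∈ T :=
    hdiv n hn (t • x) (smul_assoc n t x ▸ ht)
  have hone : (1 : ℝ) ∈ T := show (1 : ℝ) • x ∈ S from (one_smul ℝ x).symm ▸ hx
  exact Ioi_zero_subset_of_isGδ hT hdivT hone hc

section PositiveScaling

variable {K : Type*} [Field K] [LinearOrder K] [IsStrictOrderedRing K] {s : Set K}

lemma exists_pos_mul_eq_of_sign_eq {x y : K} (h : SignType.sign x = SignType.sign y) :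
    ∃ c, 0 < c ∧ c * x = y := by
  rcases lt_trichotomy x 0 with hx | rfl | hx
  · have hy : y < 0 := sign_eq_neg_one_iff.1 (h ▸ sign_neg hx)
    exact ⟨y / x, div_pos_of_neg_of_neg hy hx, div_mul_cancel₀ y hx.ne⟩
  · have hy : y = 0 := sign_eq_zero_iff.1 (h ▸ sign_zero)
    exact ⟨1, one_pos, by rw [hy, mul_zero]⟩
  · have hy : 0 < y := sign_eq_one_iff.1 (h ▸ sign_pos hx)
    exact ⟨y / x, div_pos hy hx, div_mul_cancel₀ y hx.ne'⟩

lemma mem_of_sign_eq (hs : ∀ x ∈ s, ∀ c, 0 < c → c * x ∈ s) {x y : K} (hx : x ∈ s)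
    (h : SignType.sign x = SignType.sign y) : y ∈ s := by
  obtain ⟨c, hc, rfl⟩ := exists_pos_mul_eq_of_sign_eq h
  exact hs x hx c hc

lemma exists_eq_sUnion_of_pos_mul_mem (hs : ∀ x ∈ s, ∀ c, 0 < c → c * x ∈ s) :
    ∃ S : Set (Set K), S ⊆ {Iio 0, {0}, Ioi 0} ∧ s = ⋃₀ S := by
  refine ⟨{T ∈ {Iio 0, {0}, Ioi 0} | T ⊆ s}, sep_subset _ _,
    Subset.antisymm (fun x hx => ?_) (sUnion_subset fun T hT => hT.2)⟩
  rcases lt_trichotomy x 0 with h | rfl | h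
  · exact ⟨Iio 0, ⟨by simp, fun y hy => mem_of_sign_eq hs hx
      ((sign_neg h).trans (sign_neg hy).symm)⟩, h⟩
  · exact ⟨{0}, ⟨by simp, singleton_subset_iff.2 hx⟩, rfl⟩
  · exact ⟨Ioi 0, ⟨by simp, fun y hy => mem_of_sign_eq hs hx
      ((sign_pos h).trans (sign_pos hy).symm)⟩, h⟩

lemma mk_le_three_of_pos_mul_mem {ι : Type*} {A : ι → Set K} (hne : ∀ i, (A i).Nonempty)
    (hdisj : Pairwise (Function.onFun Disjoint A))
    (hA : ∀ i, ∀ x ∈ A i, ∀ c, 0 < c → c * x ∈ A i) : Cardinal.mk ι ≤ 3 := by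
  choose a ha using hne
  have hinj : Function.Injective fun i => SignType.sign (a i) := fun i j hij =>
    hdisj.eq (not_disjoint_iff.2 ⟨a j, mem_of_sign_eq (hA i) (ha i) hij, ha j⟩)
  have hcard : Fintype.card SignType = 3 := rfl
  simpa [hcard] using Cardinal.lift_mk_le_lift_mk_of_injective hinj

end PositiveScaling

theorem stmt_13_general {ι : Type*} (A : ι → Set ℝ)
    (hne : ∀ i, (A i).Nonempty)
    (hdisj : Pairwise (Function.onFun Disjoint A))
    (hcover : (⋃ i, A i) = Set.univ)
    (hadd : ∀ i, ∀ x ∈ A i, ∀ y ∈ A i, x + y ∈ A i) :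
    (∀ i, IsGδ (A i) → ∃ S : Set (Set ℝ),
        S ⊆ {Set.Iio (0 : ℝ), {(0 : ℝ)}, Set.Ioi (0 : ℝ)} ∧ A i = ⋃₀ S) ∧
    Cardinal.mk {i // IsGδ (A i)} ≤ 3 := by
  let B (i : ι) : AddSubsemigroup ℝ := ⟨A i, fun hx hy => hadd i _ hx _ hy⟩
  have hdiv (i : ι) (n : ℕ) (hn : n ≠ 0) (x : ℝ) : n • x ∈ B i → x ∈ B i :=
    mem_of_nsmul_mem_of_partition (A := B) hdisj hcover hn
  have hscale (i : ι) (hi : IsGδ (A i)) (x : ℝ) (hx : x ∈ A i) (c : ℝ) (hc : 0 < c) :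
      c * x ∈ A i := smul_mem_of_isGδ (S := B i) hi (hdiv i) hx hc
  exact ⟨fun i hi => exists_eq_sUnion_of_pos_mul_mem (hscale i hi),
    mk_le_three_of_pos_mul_mem (A := fun i : {i // IsGδ (A i)} => A i) (fun i => hne i)
      (hdisj.comp_of_injective Subtype.val_injective) fun i => hscale i i.2⟩

/-- If `ℝ` is partitioned into nonempty `G_δ` sets closed under addition, then each piece is
the union of some subfamily of `(-∞,0)`, `{0}`, `(0,∞)`; consequently there are at most
three pieces. -/
theorem stmt_13 {ι : Type*} (A : ι → Set ℝ)
    (hne : ∀ i, (A i).Nonempty)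
    (hdisj : Pairwise (Function.onFun Disjoint A))
    (hcover : (⋃ i, A i) = Set.univ)
    (hadd : ∀ i, ∀ x ∈ A i, ∀ y ∈ A i, x + y ∈ A i)
    (hGdelta : ∀ i, IsGδ (A i)) :
    (∀ i, ∃ S : Set (Set ℝ),
        S ⊆ {Set.Iio (0 : ℝ), {(0 : ℝ)}, Set.Ioi (0 : ℝ)} ∧ A i = ⋃₀ S) ∧
    Cardinal.mk ι ≤ 3 := by
  obtain ⟨hunion, hcard⟩ := stmt_13_general A hne hdisj hcover hadd
  exact ⟨fun i => hunion i (hGdelta i), Cardinal.mk_congr (Equiv.subtypeUnivEquiv hGdelta) ▸ hcard⟩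
end

section
/- Let B ⊆ ℝ be a Borel set and let (x_i)_{i ∈ I} be real numbers such that the translates B + x_i are pairwise disjoint and their union is ℝ. Then the cardinality of I is at most ℵ₀, or it is at least cov(𝒩). In particular, if B has positive Lebesgue measure then I is countable, and if B has Lebesgue measure zero then the cardinality of I is at least cov(𝒩). -/
/-- `cov(𝒩)`: the least cardinality of a family of Lebesgue null subsets of `ℝ` covering `ℝ`. -/
noncomputable def covNull : Cardinal :=
  sInf { c : Cardinal | ∃ S : Set (Set ℝ), Cardinal.mk S = c ∧
    (∀ A ∈ S, MeasureTheory.volume A = 0) ∧ ⋃₀ S = Set.univ }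

open MeasureTheory Set Function

open scoped Cardinal Pointwise

universe u v w

/-- The covering number of the ideal of `μ`-null sets: the least cardinality of a family of
`μ`-null sets covering the space. It has the junk value `0` when there is no such family, that is,
when some singleton has positive outer measure. -/
noncomputable def nullCoveringNumber {α : Type u} [MeasurableSpace α] (μ : Measure α) :
    Cardinal.{u} :=
  sInf { c | ∃ S : Set (Set α), #S = c ∧ (∀ A ∈ S, μ A = 0) ∧ ⋃₀ S = univ }

theorem covNull_eq_nullCoveringNumber : covNull = nullCoveringNumber (volume : Measure ℝ) :=
  rfl

section Family

variable {α : Type u} {ι : Type v} [MeasurableSpace α] {μ : Measure α} {A : ι → Set α}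

theorem lift_nullCoveringNumber_le_of_iUnion_eq_univ (hnull : ∀ i, μ (A i) = 0)
    (hcover : ⋃ i, A i = univ) :
    Cardinal.lift.{v} (nullCoveringNumber μ) ≤ Cardinal.lift.{u} #ι := by
  have hrange : nullCoveringNumber μ ≤ #(range A) :=
    csInf_le' ⟨range A, rfl, forall_mem_range.2 hnull, (sUnion_range A).trans hcover⟩
  exact (Cardinal.lift_le.2 hrange).trans Cardinal.mk_range_le_lift

theorem countable_of_pairwise_aedisjoint_of_measure_pos [SFinite μ]
    (hA : ∀ i, NullMeasurableSet (A i) μ) (hdisj : Pairwise (AEDisjoint μ on A))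
    (hpos : ∀ i, 0 < μ (A i)) : Countable ι := by
  have hcount : {i | 0 < μ (A i)}.Countable :=
    Measure.countable_meas_pos_of_disjoint_iUnion₀ hA hdisj
  exact countable_univ_iff.1 (hcount.mono fun i _ => hpos i)

end Family

theorem stmt_16_general {G : Type w} {α : Type u} {ι : Type v} [AddGroup G] [AddAction G α]
    [MeasurableSpace α] [MeasurableConstVAdd G α] (μ : Measure α) [SFinite μ]
    [VAddInvariantMeasure G α μ] {B : Set α} (hB : NullMeasurableSet B μ) (g : ι → G)
    (hdisj : Pairwise (AEDisjoint μ on fun i => g i +ᵥ B)) (hcover : ⋃ i, g i +ᵥ B = univ) :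
    (#ι ≤ ℵ₀ ∨ Cardinal.lift.{v} (nullCoveringNumber μ) ≤ Cardinal.lift.{u} #ι) ∧
    (0 < μ B → #ι ≤ ℵ₀) ∧
    (μ B = 0 → Cardinal.lift.{v} (nullCoveringNumber μ) ≤ Cardinal.lift.{u} #ι) := by
  have hvol (i : ι) : μ (g i +ᵥ B) = μ B := measure_vadd μ (g i) B
  have hpos (h : 0 < μ B) : #ι ≤ ℵ₀ :=
    Cardinal.mk_le_aleph0_iff.2 <| countable_of_pairwise_aedisjoint_of_measure_pos
      (fun i => hB.vadd (g i)) hdisj fun i => h.trans_eq (hvol i).symm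
  have hnull (h : μ B = 0) :
      Cardinal.lift.{v} (nullCoveringNumber μ) ≤ Cardinal.lift.{u} #ι :=
    lift_nullCoveringNumber_le_of_iUnion_eq_univ (fun i => (hvol i).trans h) hcover
  exact ⟨(eq_zero_or_pos (μ B)).symm.imp hpos hnull, hpos, hnull⟩

/-- If `ℝ` is partitioned into pairwise disjoint translates `B + x i` of a Borel set `B`, then
the number of translates is at most `ℵ₀` or at least `cov(𝒩)`; in particular, if `B` has
positive measure there are countably many translates, and if `B` is null there are at least
`cov(𝒩)` many. -/
theorem stmt_16 (B : Set ℝ) (hB : MeasurableSet B) {ι : Type} (x : ι → ℝ)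
    (hdisj : Pairwise (Function.onFun Disjoint (fun i => (fun b => b + x i) '' B)))
    (hcover : (⋃ i, (fun b => b + x i) '' B) = Set.univ) :
    (Cardinal.mk ι ≤ Cardinal.aleph0 ∨ covNull ≤ Cardinal.mk ι) ∧
    (0 < MeasureTheory.volume B → Cardinal.mk ι ≤ Cardinal.aleph0) ∧
    (MeasureTheory.volume B = 0 → covNull ≤ Cardinal.mk ι) := by
  -- The translate `B + x i` is `AddOpposite.op (x i) +ᵥ B`, for the action of `ℝ` on the right.
  simpa only [Cardinal.lift_id, covNull_eq_nullCoveringNumber] using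
    stmt_16_general volume hB.nullMeasurableSet (fun i => AddOpposite.op (x i))
      hdisj.aedisjoint hcover
end

section
/- Let B ⊆ ℝ be a σ-compact (equivalently, F_σ) set and let (x_i)_{i ∈ I} be real numbers such that the translates B + x_i are pairwise disjoint, their union is ℝ, and the cardinality of I is uncountable. Then the cardinality of I equals 2^ℵ₀. -/
/-!
Call `S` a clique for `U ⊆ α × α` if `(a, b) ∈ U` for all distinct `a, b ∈ S`. In a Polish space, a
`Gδ` relation `U = ⋂ n, V n` with an uncountable clique has one indexed by the Cantor space (Kubiś,
*Perfect cliques and `Gδ` colorings of Polish spaces*). To see this, build a Cantor scheme of closed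
balls centred at points of a dense-in-itself clique. Since `V n` is open, the finitely many balls of
level `n` can be taken so small that any two of them have their product inside `V n`, so points on
different branches are related by every `V n`.

If the translates `B + x i` are disjoint, then the `x i` form a clique for `a - b ∉ B - B`. This
relation is `Gδ` because `B - B` is σ-compact, so it has a clique of cardinality `2 ^ ℵ₀`. Two
points of the same translate of `B` differ by an element of `B - B`, so the points of this clique
lie in different translates.
-/

open Function Set Filter Topology Metric
open scoped Cardinal Pointwise

section Topology

variable {α : Type*} [TopologicalSpace α]

theorem preperfect_image_of_injective {β : Type*} [TopologicalSpace β] {P : Set α}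
    (hP : Preperfect P) {f : α → β} (hf : Continuous f) (hinj : Injective f) :
    Preperfect (f '' P) := by
  rintro _ ⟨a, ha, rfl⟩
  simpa only [map_principal] using (hP a ha).map hf.continuousAt hinj

theorem exists_preperfect_subset_of_not_countable [SecondCountableTopology α] {S : Set α}
    (hS : ¬ S.Countable) : ∃ P ⊆ S, Preperfect P ∧ P.Nonempty := by
  obtain ⟨D, hD, hDne, -⟩ := exists_perfect_nonempty_of_isClosed_of_not_countable
    (isClosed_univ (X := S)) (by rwa [countable_univ_iff])
  exact ⟨(↑) '' D, Subtype.coe_image_subset S D,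
    preperfect_image_of_injective hD.acc continuous_subtype_val Subtype.val_injective,
    hDne.image _⟩

theorem isSigmaCompact_prod {β : Type*} [TopologicalSpace β] {s : Set α} {t : Set β}
    (hs : IsSigmaCompact s) (ht : IsSigmaCompact t) : IsSigmaCompact (s ×ˢ t) := by
  obtain ⟨K, hK, rfl⟩ := hs
  obtain ⟨L, hL, rfl⟩ := ht
  rw [prod_iUnion]
  simp_rw [iUnion_prod_const]
  exact isSigmaCompact_iUnion _ fun j =>
    isSigmaCompact_iUnion_of_isCompact _ fun i => (hK i).prod (hL j)

theorem isGδ_compl_of_isSigmaCompact [T2Space α] {s : Set α} (hs : IsSigmaCompact s) : IsGδ sᶜ := by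
  obtain ⟨K, hK, rfl⟩ := hs
  rw [compl_iUnion]
  exact .iInter_of_isOpen fun n => (hK n).isClosed.isOpen_compl

theorem exists_antitone_isOpen_of_isGδ {U : Set α} (hU : IsGδ U) :
    ∃ V : ℕ → Set α, Antitone V ∧ (∀ n, IsOpen (V n)) ∧ U = ⋂ n, V n := by
  obtain ⟨W, hW, rfl⟩ := hU.eq_iInter_nat
  exact ⟨dissipate W, antitone_dissipate,
    fun n => (finite_Iic n).isOpen_biInter fun k _ => hW k, iInter_dissipate.symm⟩

end Topology

section CantorClique

variable {α : Type*}

theorem eventually_closedBall_prod_subset {β : Type*} [PseudoMetricSpace α] [PseudoMetricSpace β]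
    {U : Set (α × β)} {a : α} {b : β} (hU : U ∈ 𝓝 (a, b)) :
    ∀ᶠ r in 𝓝 (0 : ℝ), closedBall a r ×ˢ closedBall b r ⊆ U := by
  simpa only [closedBall_prod_same] using eventually_closedBall_subset hU

/-- Level `n` of a Cantor scheme of closed balls: the balls are indexed by the binary words of
length `n`, are centred in `P`, have a common radius, and the product of any two distinct ones lies
in `U`. Centres are given to words of all lengths, but only those of length `n` matter. -/
structure CantorLevel [PseudoMetricSpace α] (P : Set α) (U : Set (α × α)) (n : ℕ) where
  center : List Bool → α
  radius : ℝ
  center_mem : ∀ l, center l ∈ P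
  radius_pos : 0 < radius
  radius_le : radius ≤ (1 / 2) ^ n
  pairwise : {l : List Bool | l.length = n}.Pairwise fun s t =>
    closedBall (center s) radius ×ˢ closedBall (center t) radius ⊆ U

theorem exists_injOn_cons_mem_ball [PseudoMetricSpace α] {P : Set α}
    (hP : Preperfect P) {c : List Bool → α} (hc : ∀ l, c l ∈ P) {r : ℝ} (hr : 0 < r) {n : ℕ}
    (hdisj : {l : List Bool | l.length = n}.PairwiseDisjoint fun l => closedBall (c l) r) :
    ∃ c' : List Bool → α, (∀ l, c' l ∈ P) ∧ InjOn c' {l | l.length = n + 1} ∧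
      ∀ l b, c' (b :: l) ∈ ball (c l) r := by
  choose d hd hdne using fun l => preperfect_iff_nhds.1 hP (c l) (hc l) _ (ball_mem_nhds _ hr)
  let c' : List Bool → α
    | [] => c []
    | b :: l => if b then d l else c l
  have hball : ∀ l b, c' (b :: l) ∈ ball (c l) r
    | l, true => (hd l).1
    | l, false => mem_ball_self hr
  refine ⟨c', ?_, ?_, hball⟩
  · rintro (_ | ⟨_ | _, l⟩)
    exacts [hc [], hc l, (hd l).2]
  · rintro (_ | ⟨b, l⟩) hl (_ | ⟨b', l'⟩) hl' heq <;>
      simp only [mem_ofPred_eq, List.length_nil, List.length_cons, Nat.add_right_cancel_iff,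
        Nat.zero_ne_add_one] at hl hl'
    obtain rfl : l = l' := hdisj.elim_set hl hl' (c' (b :: l)) (ball_subset_closedBall (hball l b))
      (heq ▸ ball_subset_closedBall (hball l' b'))
    cases b <;> cases b'
    exacts [rfl, absurd heq.symm (hdne l), absurd heq (hdne l), rfl]

theorem CantorLevel.exists_succ [PseudoMetricSpace α] {P : Set α} (hP : Preperfect P)
    {U V : Set (α × α)} {n : ℕ} (σ : CantorLevel P U n) (hU : U ⊆ (diagonal α)ᶜ) (hV : IsOpen V)
    (hPV : P.Pairwise fun a b => (a, b) ∈ V) :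
    ∃ τ : CantorLevel P V (n + 1), ∀ l b, l.length = n →
      closedBall (τ.center (b :: l)) τ.radius ⊆ closedBall (σ.center l) σ.radius := by
  obtain ⟨c, hcP, hcinj, hcball⟩ := exists_injOn_cons_mem_ball hP σ.center_mem σ.radius_pos
    (σ.pairwise.mono' fun _ _ h => prod_subset_compl_diagonal_iff_disjoint.1 (h.trans hU))
  have hnested : ∀ᶠ r in 𝓝 (0 : ℝ), ∀ l ∈ {l : List Bool | l.length = n}, ∀ b,
      closedBall (c (b :: l)) r ⊆ closedBall (σ.center l) σ.radius :=
    (eventually_all_finite (List.finite_length_eq Bool n)).2 fun l _ => eventually_all.2 fun b =>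
      eventually_closedBall_subset (closedBall_mem_nhds_of_mem (hcball l b))
  have hpairwise : ∀ᶠ r in 𝓝 (0 : ℝ), {l : List Bool | l.length = n + 1}.Pairwise fun s t =>
      closedBall (c s) r ×ˢ closedBall (c t) r ⊆ V := by
    have hfin := List.finite_length_eq Bool (n + 1)
    refine (eventually_all_finite hfin).2 fun s hs => (eventually_all_finite hfin).2 fun t ht =>
      eventually_imp_distrib_left.2 fun hst => eventually_closedBall_prod_subset ?_
    exact hV.mem_nhds (hPV (hcP s) (hcP t) (hcinj.ne hs ht hst))
  have hsmall : ∀ᶠ r in 𝓝[>] (0 : ℝ), r ∈ Ioc 0 ((1 / 2) ^ (n + 1)) :=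
    Ioc_mem_nhdsGT (by positivity)
  obtain ⟨r, ⟨hr, hrle⟩, hrn, hrp⟩ :=
    (hsmall.and ((hnested.and hpairwise).filter_mono nhdsWithin_le_nhds)).exists
  exact ⟨⟨c, r, hcP, hr, hrle, hrp⟩, fun l b hl => hrn l hl b⟩

theorem vanishingDiam_of_subset_closedBall {β : Type*} [PseudoMetricSpace α] {A : List β → Set α}
    {c : List β → α} {r : ℕ → ℝ} (hr : Tendsto r atTop (𝓝 0))
    (hA : ∀ l, A l ⊆ closedBall (c l) (r l.length)) : CantorScheme.VanishingDiam A := by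
  intro x
  have hle : ∀ n, ediam (A (PiNat.res x n)) ≤ ENNReal.ofReal (2 * r n) := fun n => by
    refine ediam_le_of_forall_dist_le fun y hy z hz => ?_
    have hyc := mem_closedBall.1 (hA _ hy)
    have hzc := mem_closedBall.1 (hA _ hz)
    rw [PiNat.res_length] at hyc hzc
    linarith [dist_triangle_right y z (c (PiNat.res x n))]
  refine tendsto_of_tendsto_of_tendsto_of_le_of_le tendsto_const_nhds ?_ (fun _ => zero_le) hle
  simpa using ENNReal.tendsto_ofReal (hr.const_mul 2)

theorem exists_cantorScheme_pairwise_prod_subset [PseudoMetricSpace α] {P : Set α}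
    (hP : Preperfect P) (hPne : P.Nonempty) {V : ℕ → Set (α × α)} (hV : ∀ n, IsOpen (V n))
    (hVdiag : ∀ n, V n ⊆ (diagonal α)ᶜ) (hPV : ∀ n, P.Pairwise fun a b => (a, b) ∈ V n) :
    ∃ A : List Bool → Set α, CantorScheme.ClosureAntitone A ∧ CantorScheme.VanishingDiam A ∧
      (∀ l, (A l).Nonempty) ∧
      ∀ n, {l : List Bool | l.length = n}.Pairwise fun s t => A s ×ˢ A t ⊆ V n := by
  obtain ⟨p, hp⟩ := hPne
  let root : CantorLevel P (V 0) 0 :=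
    { center := fun _ => p
      radius := 1
      center_mem := fun _ => hp
      radius_pos := one_pos
      radius_le := by rw [pow_zero]
      pairwise := fun s hs t ht hst =>
        absurd ((List.length_eq_zero_iff.1 hs).trans (List.length_eq_zero_iff.1 ht).symm) hst }
  choose next hnext using fun n (σ : CantorLevel P (V n) n) =>
    σ.exists_succ hP (hVdiag n) (hV (n + 1)) (hPV (n + 1))
  let σ : ∀ n, CantorLevel P (V n) n := fun n => Nat.rec root next n
  let A : List Bool → Set α := fun l => closedBall ((σ l.length).center l) (σ l.length).radius
  have hanti : CantorScheme.Antitone A := fun l b => hnext l.length (σ l.length) l b rfl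
  have hdiam : CantorScheme.VanishingDiam A := vanishingDiam_of_subset_closedBall
    (tendsto_pow_atTop_nhds_zero_of_lt_one (by norm_num) one_half_lt_one)
    fun l => closedBall_subset_closedBall (σ l.length).radius_le
  refine ⟨A, hanti.closureAntitone fun _ => isClosed_closedBall, hdiam,
    fun l => nonempty_closedBall.2 (σ l.length).radius_pos.le, ?_⟩
  have hA : ∀ n l, l.length = n → A l = closedBall ((σ n).center l) (σ n).radius := by
    rintro _ l rfl
    rfl
  intro n s hs t ht hst
  simpa only [hA n s hs, hA n t ht] using (σ n).pairwise hs ht hst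

theorem exists_cantor_clique_of_cantorScheme [PseudoMetricSpace α] [CompleteSpace α]
    {A : List Bool → Set α} (hanti : CantorScheme.ClosureAntitone A)
    (hdiam : CantorScheme.VanishingDiam A) (hne : ∀ l, (A l).Nonempty) {V : ℕ → Set (α × α)}
    (hV : Antitone V)
    (hA : ∀ n, {l : List Bool | l.length = n}.Pairwise fun s t => A s ×ˢ A t ⊆ V n) :
    ∃ q : (ℕ → Bool) → α, Continuous q ∧ Pairwise fun f g => ∀ n, (q f, q g) ∈ V n := by
  have hdom : ∀ f, f ∈ (CantorScheme.inducedMap A).1 := fun f =>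
    hanti.map_of_vanishingDiam hdiam hne ▸ mem_univ f
  let q : (ℕ → Bool) → α := fun f => (CantorScheme.inducedMap A).2 ⟨f, hdom f⟩
  have hq : ∀ f n, q f ∈ A (PiNat.res f n) := fun f n => CantorScheme.map_mem ⟨f, hdom f⟩ n
  refine ⟨q, hdiam.map_continuous.comp (by fun_prop), fun f g hfg n => ?_⟩
  obtain ⟨k, hk⟩ := Function.ne_iff.1 hfg
  have hres : PiNat.res f (max n (k + 1)) ≠ PiNat.res g (max n (k + 1)) := fun h =>
    hk (PiNat.res_eq_res.1 h (lt_max_of_lt_right k.lt_succ_self))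
  exact hV (le_max_left n (k + 1)) <|
    hA _ (PiNat.res_length f _) (PiNat.res_length g _) hres ⟨hq f _, hq g _⟩

theorem exists_cantor_clique_of_isGδ [TopologicalSpace α] [PolishSpace α] {U : Set (α × α)}
    (hU : IsGδ U) {S : Set α} (hS : ¬ S.Countable) (hSU : S.Pairwise fun a b => (a, b) ∈ U) :
    ∃ q : (ℕ → Bool) → α, Continuous q ∧ Injective q ∧ Pairwise fun f g => (q f, q g) ∈ U := by
  let := TopologicalSpace.upgradeIsCompletelyMetrizable α
  obtain ⟨P, hPS, hP, hPne⟩ := exists_preperfect_subset_of_not_countable hS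
  obtain ⟨V, hVanti, hVopen, rfl⟩ := exists_antitone_isOpen_of_isGδ hU
  -- Removing the diagonal from each `V n` makes the balls of a level pairwise disjoint.
  obtain ⟨A, hanti, hdiam, hne, hA⟩ := exists_cantorScheme_pairwise_prod_subset hP hPne
    (V := fun n => V n \ diagonal α) (fun n => (hVopen n).sdiff isClosed_diagonal)
    (fun n => inter_subset_right)
    fun n a ha b hb hab => ⟨mem_iInter.1 (hSU (hPS ha) (hPS hb) hab) n, hab⟩
  obtain ⟨q, hqcont, hq⟩ := exists_cantor_clique_of_cantorScheme hanti hdiam hne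
    (fun _ _ hmn => sdiff_subset_sdiff_left (hVanti hmn)) hA
  exact ⟨q, hqcont, injective_iff_pairwise_ne.2 fun f g hfg => (hq hfg 0).2,
    fun f g hfg => mem_iInter.2 fun n => (hq hfg n).1⟩

end CantorClique

theorem mk_le_continuum_of_polishSpace (α : Type*) [TopologicalSpace α] [PolishSpace α] :
    #α ≤ 𝔠 := by
  cases isEmpty_or_nonempty α
  · simp
  · obtain ⟨f, -, hf⟩ := PolishSpace.exists_nat_nat_continuous_surjective α
    simpa using Cardinal.lift_mk_le_lift_mk_of_surjective hf

section Translates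

variable {G ι : Type*} {B : Set G} {x : ι → G}

theorem injective_of_pairwise_disjoint_translates [Add G] (hB : B.Nonempty)
    (hdisj : Pairwise (Disjoint on fun i => (· + x i) '' B)) : Injective x :=
  injective_iff_pairwise_ne.2 fun i j hij hx =>
    (hB.image (· + x i)).ne_empty <| disjoint_self.1 <| by
      simpa only [onFun, ← hx] using hdisj hij

theorem sub_mem_sub_of_mem_translate [AddGroup G] {a y z : G} (hy : y ∈ (· + a) '' B)
    (hz : z ∈ (· + a) '' B) : y - z ∈ B - B := by
  obtain ⟨b, hb, rfl⟩ := hy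
  obtain ⟨c, hc, rfl⟩ := hz
  simpa only [add_sub_add_right_eq_sub] using sub_mem_sub hb hc

theorem exists_injective_of_pairwise_sub_notMem_sub [AddGroup G] {κ : Type*} {q : κ → G}
    (hq : Pairwise fun j k => q j - q k ∉ B - B) (hcover : ⋃ i, (· + x i) '' B = univ) :
    ∃ f : κ → ι, Injective f := by
  choose f hf using fun k => mem_iUnion.1 (hcover.ge (mem_univ (q k)))
  exact ⟨f, injective_iff_pairwise_ne.2 fun j k hjk hfjk =>
    hq hjk (sub_mem_sub_of_mem_translate (hfjk ▸ hf j) (hf k))⟩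

theorem sub_notMem_sub_of_disjoint_translates [AddCommGroup G] {a b : G}
    (h : Disjoint ((· + a) '' B) ((· + b) '' B)) : a - b ∉ B - B := by
  rintro ⟨c, hc, d, hd, hcd⟩
  exact disjoint_left.1 h ⟨d, hd, rfl⟩ ⟨c, hc, by grind⟩

theorem pairwise_range_sub_notMem_sub [AddCommGroup G]
    (hdisj : Pairwise (Disjoint on fun i => (· + x i) '' B)) :
    (range x).Pairwise fun a b => a - b ∉ B - B := by
  rintro _ ⟨i, rfl⟩ _ ⟨j, rfl⟩ hij
  exact sub_notMem_sub_of_disjoint_translates (hdisj (ne_of_apply_ne x hij))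

theorem isGδ_setOf_sub_notMem_sub [Sub G] [TopologicalSpace G] [ContinuousSub G] [T2Space G]
    (hB : IsSigmaCompact B) : IsGδ {p : G × G | p.1 - p.2 ∉ B - B} := by
  have hBB : IsSigmaCompact (B - B) :=
    sub_image_prod (s := B) (t := B) ▸ (isSigmaCompact_prod hB hB).image continuous_sub
  exact (isGδ_compl_of_isSigmaCompact hBB).preimage continuous_sub

end Translates

theorem stmt_17_general {G : Type*} [AddCommGroup G] [TopologicalSpace G]
    [IsTopologicalAddGroup G] [PolishSpace G] {B : Set G} (hB : IsSigmaCompact B) {ι : Type*}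
    (x : ι → G) (hdisj : Pairwise (Disjoint on fun i => (· + x i) '' B))
    (hcover : ⋃ i, (· + x i) '' B = univ) (huncount : ℵ₀ < #ι) : #ι = 𝔠 := by
  have hBne : B.Nonempty := by
    obtain ⟨i, b, hb, -⟩ := mem_iUnion.1 (hcover.ge (mem_univ 0))
    exact ⟨b, hb⟩
  have hinj : Injective x := injective_of_pairwise_disjoint_translates hBne hdisj
  have hrange : ¬ (range x).Countable := fun h => huncount.not_ge <| Cardinal.mk_le_aleph0_iff.2 <|
    (Equiv.ofInjective x hinj).countable_iff.2 h.to_subtype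
  obtain ⟨q, -, -, hq⟩ := exists_cantor_clique_of_isGδ (isGδ_setOf_sub_notMem_sub hB) hrange
    (pairwise_range_sub_notMem_sub hdisj)
  obtain ⟨f, hf⟩ := exists_injective_of_pairwise_sub_notMem_sub hq hcover
  apply le_antisymm
  · simpa using (Cardinal.lift_mk_le_lift_mk_of_injective hinj).trans
      (Cardinal.lift_le.2 (mk_le_continuum_of_polishSpace G))
  · simpa using Cardinal.lift_mk_le_lift_mk_of_injective hf

/-- If `ℝ` is partitioned into uncountably many pairwise disjoint translates `B + x i` of a
σ-compact set `B`, then the number of translates is exactly `2^ℵ₀`. -/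
theorem stmt_17 (B : Set ℝ) (hB : IsSigmaCompact B) {ι : Type} (x : ι → ℝ)
    (hdisj : Pairwise (Function.onFun Disjoint (fun i => (fun b => b + x i) '' B)))
    (hcover : (⋃ i, (fun b => b + x i) '' B) = Set.univ)
    (huncount : Cardinal.aleph0 < Cardinal.mk ι) :
    Cardinal.mk ι = Cardinal.continuum :=
  stmt_17_general hB x hdisj hcover huncount
end

section
/- Suppose (H_i)_{i ∈ I} is a family of additive subgroups of ℝ whose union is ℝ and such that H_i ∩ H_j = {0} for all distinct i, j ∈ I. Then each H_i is a ℚ-linear subspace of ℝ, i.e., each H_i is closed under multiplication by rational numbers. -/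
theorem nsmulSaturated_of_cover_of_disjoint {ι M : Type*} [AddMonoid M] [IsAddTorsionFree M]
    {H : ι → AddSubmonoid M} (hcover : ∀ x, ∃ i, x ∈ H i)
    (hdisj : Pairwise fun i j ↦ Disjoint (H i) (H j)) (i : ι) : (H i).NSMulSaturated := by
  intro n x hnx
  obtain ⟨j, hxj⟩ := hcover x
  obtain rfl | hij := eq_or_ne i j
  · exact .inr hxj
  have hzero : n • x = 0 :=
    AddSubmonoid.disjoint_def.mp (hdisj hij) hnx ((H j).nsmul_mem hxj n)
  refine or_iff_not_imp_left.mpr fun hn ↦ ?_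
  rw [(nsmul_eq_zero_iff_right hn).mp hzero]
  exact (H i).zero_mem

theorem rat_smul_mem_of_nsmulSaturated {V : Type*} [AddCommGroup V] [Module ℚ V]
    {H : AddSubgroup V} (hsat : H.NSMulSaturated) (q : ℚ) {x : V} (hx : x ∈ H) : q • x ∈ H := by
  have hclear : q.den • q • x = q.num • x := by
    rw [← Nat.cast_smul_eq_nsmul ℚ, smul_smul, q.den_mul_eq_num, Int.cast_smul_eq_zsmul]
  have hmem : q.den • q • x ∈ H := hclear ▸ H.zsmul_mem hx q.num
  exact (hsat hmem).resolve_left q.den_ne_zero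

theorem stmt_19_general {ι V : Type*} [AddCommGroup V] [Module ℚ V] (H : ι → AddSubgroup V)
    (hcover : ∀ x, ∃ i, x ∈ H i) (hdisj : ∀ i j, i ≠ j → H i ⊓ H j = ⊥) :
    ∀ i, ∀ q : ℚ, ∀ x ∈ H i, q • x ∈ H i := by
  intro i q x hx
  have : IsAddTorsionFree V := .of_module_rat V
  have hdisj' : Pairwise fun i j ↦ Disjoint (H i).toAddSubmonoid (H j).toAddSubmonoid :=
    fun i j hij ↦ AddSubmonoid.disjoint_def.mpr <|
      AddSubgroup.disjoint_def.mp (disjoint_iff.mpr (hdisj i j hij))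
  have hsat : (H i).NSMulSaturated := nsmulSaturated_of_cover_of_disjoint hcover hdisj' i
  exact rat_smul_mem_of_nsmulSaturated hsat q hx

/-- If `ℝ` is the union of a family of additive subgroups any two distinct of which intersect
exactly in `{0}`, then each of these subgroups is a `ℚ`-linear subspace of `ℝ`, i.e. closed
under multiplication by rational numbers. -/
theorem stmt_19 {ι : Type*} (H : ι → AddSubgroup ℝ)
    (hcover : ∀ x : ℝ, ∃ i, x ∈ H i)
    (hdisj : ∀ i j, i ≠ j → H i ⊓ H j = (⊥ : AddSubgroup ℝ)) :
    ∀ i, ∀ q : ℚ, ∀ x ∈ H i, (q : ℝ) * x ∈ H i := by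
  simpa only [Rat.smul_def] using stmt_19_general H hcover hdisj
end
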